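/- arXiv:1906.00828 — 4 statements merged into one kernel-verified Lean document; each statement's English description precedes it below -/
import Mathlib

section
/- Let L, B, T > 0, δ ∈ [0,1], ε > 0, Ω = (0,L) × (−B,B), and let u be a smooth function on [0,L] × [−B,B] × [0,T] satisfying the parabolic regularization u_t + u_x + |u|^{1+δ} u_x + u_{xxx} + u_{xyy} + ε(∂_x⁴u + ∂_y⁴u) = 0 on Ω × (0,T), with boundary conditions u(x,±B,t) = ∂_y²u(x,±B,t) = 0 for x ∈ (0,L), and u(0,y,t) = u(L,y,t) = ∂_x²u(0,y,t) = ∂_x u(L,y,t) = 0 for y ∈ (−B,B). Then for every t ∈ [0,T], ∫_Ω u²(t) dx dy + ∫₀^t ∫_{−B}^{B} u_x²(0,y,τ) dy dτ + 2ε ∫₀^t ∫_Ω (u_{xx}² + u_{yy}²) dx dy dτ = ∫_Ω u²(0) dx dy. -/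
/-!
Multiplying the equation by `2u` puts it in divergence form
`2 u u_t + ∂_x P + ∂_y Q + 2ε (u_xx² + u_yy²) = 0` with

* `P = u² + Φ(u) + 2 u u_xx - u_x² - u_y² + 2ε (u u_xxx - u_x u_xx)`, where
  `Φ' (s) = 2 s |s|^(1+δ)` and `Φ 0 = 0`;
* `Q = 2 u u_xy + 2ε (u u_yyy - u_y u_yy)`.

The boundary conditions make `Q` vanish on `y = ±B` and `P` vanish on `x = L`, while `P = -u_x²` on
`x = 0`; here `u_y = 0` on the sides `x = 0` and `x = L` because `u` vanishes along them. Integrating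
over `Ω` (`integral_divergence`) gives the rate form of the identity at each time in `(0, T)`, and
integrating that in time, with Fubini to move the time integral inside, gives the theorem.

The equation and the boundary conditions are only known on open sets, so all integrands are compared
on open intervals, which changes no integral.
-/

open MeasureTheory Real Set

/-- Partial derivative in `x` of a function `u = u(x,y,t)`. -/
noncomputable def pdx (u : ℝ → ℝ → ℝ → ℝ) (x y t : ℝ) : ℝ := deriv (fun x' => u x' y t) x

/-- Partial derivative in `y` of a function `u = u(x,y,t)`. -/
noncomputable def pdy (u : ℝ → ℝ → ℝ → ℝ) (x y t : ℝ) : ℝ := deriv (fun y' => u x y' t) y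

/-- Partial derivative in `t` of a function `u = u(x,y,t)`. -/
noncomputable def pdt (u : ℝ → ℝ → ℝ → ℝ) (x y t : ℝ) : ℝ := deriv (fun t' => u x y t') t

/-! ### Partial derivatives of jointly smooth functions -/

/-- Joint smoothness of a function of `(x, y, t)` on all of `ℝ³`. -/
def JointSmooth (u : ℝ → ℝ → ℝ → ℝ) : Prop :=
  ContDiff ℝ (⊤ : ℕ∞) (fun p : ℝ × ℝ × ℝ => u p.1 p.2.1 p.2.2)

namespace JointSmooth

variable {u : ℝ → ℝ → ℝ → ℝ}

lemma continuous_comp (hu : JointSmooth u) {X : Type*} [TopologicalSpace X] {f g h : X → ℝ}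
    (hf : Continuous f) (hg : Continuous g) (hh : Continuous h) :
    Continuous fun z => u (f z) (g z) (h z) :=
  (ContDiff.continuous hu).comp (hf.prodMk (hg.prodMk hh))

lemma hasFDerivAt (hu : JointSmooth u) (p : ℝ × ℝ × ℝ) :
    HasFDerivAt (fun p : ℝ × ℝ × ℝ => u p.1 p.2.1 p.2.2)
      (fderiv ℝ (fun p : ℝ × ℝ × ℝ => u p.1 p.2.1 p.2.2) p) p :=
  (ContDiff.differentiable hu (by simp)).differentiableAt.hasFDerivAt

lemma hasDerivAt_x_fderiv (hu : JointSmooth u) (x y t : ℝ) :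
    HasDerivAt (fun x' => u x' y t)
      (fderiv ℝ (fun p : ℝ × ℝ × ℝ => u p.1 p.2.1 p.2.2) (x, y, t) (1, 0, 0)) x :=
  (hu.hasFDerivAt (x, y, t)).comp_hasDerivAt x
    (f := fun x' : ℝ => ((x', y, t) : ℝ × ℝ × ℝ))
    ((hasDerivAt_id x).prodMk (hasDerivAt_const x (y, t)))

lemma hasDerivAt_y_fderiv (hu : JointSmooth u) (x y t : ℝ) :
    HasDerivAt (fun y' => u x y' t)
      (fderiv ℝ (fun p : ℝ × ℝ × ℝ => u p.1 p.2.1 p.2.2) (x, y, t) (0, 1, 0)) y :=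
  (hu.hasFDerivAt (x, y, t)).comp_hasDerivAt y
    (f := fun y' : ℝ => ((x, y', t) : ℝ × ℝ × ℝ))
    ((hasDerivAt_const y x).prodMk ((hasDerivAt_id y).prodMk (hasDerivAt_const y t)))

lemma hasDerivAt_t_fderiv (hu : JointSmooth u) (x y t : ℝ) :
    HasDerivAt (fun t' => u x y t')
      (fderiv ℝ (fun p : ℝ × ℝ × ℝ => u p.1 p.2.1 p.2.2) (x, y, t) (0, 0, 1)) t :=
  (hu.hasFDerivAt (x, y, t)).comp_hasDerivAt t
    (f := fun t' : ℝ => ((x, y, t') : ℝ × ℝ × ℝ))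
    ((hasDerivAt_const t x).prodMk ((hasDerivAt_const t y).prodMk (hasDerivAt_id t)))

lemma hasDerivAt_x (hu : JointSmooth u) (x y t : ℝ) :
    HasDerivAt (fun x' => u x' y t) (pdx u x y t) x :=
  (hu.hasDerivAt_x_fderiv x y t).differentiableAt.hasDerivAt

lemma hasDerivAt_y (hu : JointSmooth u) (x y t : ℝ) :
    HasDerivAt (fun y' => u x y' t) (pdy u x y t) y :=
  (hu.hasDerivAt_y_fderiv x y t).differentiableAt.hasDerivAt

lemma hasDerivAt_t (hu : JointSmooth u) (x y t : ℝ) :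
    HasDerivAt (fun t' => u x y t') (pdt u x y t) t :=
  (hu.hasDerivAt_t_fderiv x y t).differentiableAt.hasDerivAt

lemma contDiff_fderiv_apply (hu : JointSmooth u) (v : ℝ × ℝ × ℝ) :
    ContDiff ℝ (⊤ : ℕ∞)
      (fun p => fderiv ℝ (fun p : ℝ × ℝ × ℝ => u p.1 p.2.1 p.2.2) p v) :=
  (ContDiff.fderiv_right hu (by simp)).clm_apply contDiff_const

lemma pdx (hu : JointSmooth u) : JointSmooth (pdx u) := by
  have h := hu.contDiff_fderiv_apply (1, 0, 0)
  rwa [← funext fun p : ℝ × ℝ × ℝ => (hu.hasDerivAt_x_fderiv p.1 p.2.1 p.2.2).deriv] at h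

lemma pdy (hu : JointSmooth u) : JointSmooth (pdy u) := by
  have h := hu.contDiff_fderiv_apply (0, 1, 0)
  rwa [← funext fun p : ℝ × ℝ × ℝ => (hu.hasDerivAt_y_fderiv p.1 p.2.1 p.2.2).deriv] at h

lemma pdt (hu : JointSmooth u) : JointSmooth (pdt u) := by
  have h := hu.contDiff_fderiv_apply (0, 0, 1)
  rwa [← funext fun p : ℝ × ℝ × ℝ => (hu.hasDerivAt_t_fderiv p.1 p.2.1 p.2.2).deriv] at h

lemma pdx_pdy_comm (hu : JointSmooth u) (x y t : ℝ) :
    _root_.pdx (_root_.pdy u) x y t = _root_.pdy (_root_.pdx u) x y t := by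
  set U : ℝ × ℝ × ℝ → ℝ := fun p => u p.1 p.2.1 p.2.2 with hU
  have hd : DifferentiableAt ℝ (fderiv ℝ U) (x, y, t) :=
    ((ContDiff.fderiv_right (m := (⊤ : ℕ∞)) hu (by simp)).differentiable
      (by simp)).differentiableAt
  have hfy : (fun p : ℝ × ℝ × ℝ => _root_.pdy u p.1 p.2.1 p.2.2)
      = fun p => fderiv ℝ U p (0, 1, 0) :=
    funext fun p => (hu.hasDerivAt_y_fderiv p.1 p.2.1 p.2.2).deriv
  have hfx : (fun p : ℝ × ℝ × ℝ => _root_.pdx u p.1 p.2.1 p.2.2)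
      = fun p => fderiv ℝ U p (1, 0, 0) :=
    funext fun p => (hu.hasDerivAt_x_fderiv p.1 p.2.1 p.2.2).deriv
  have hxy := (hu.pdy.hasDerivAt_x_fderiv x y t).deriv
  have hyx := (hu.pdx.hasDerivAt_y_fderiv x y t).deriv
  rw [hfy, fderiv_clm_apply hd (differentiableAt_const _)] at hxy
  rw [hfx, fderiv_clm_apply hd (differentiableAt_const _)] at hyx
  have hsymm : IsSymmSndFDerivAt ℝ U (x, y, t) :=
    (ContDiff.contDiffAt hu).isSymmSndFDerivAt
      (by simpa using WithTop.coe_le_coe.2 (le_top (a := (2 : ℕ∞))))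
  have h := hsymm.eq (1, 0, 0) (0, 1, 0)
  simp at hxy hyx
  exact hxy.trans (h.trans hyx.symm)

end JointSmooth

/-! ### Iterated interval integrals of continuous functions -/

lemma integral_integral_swap_of_continuous {f : ℝ → ℝ → ℝ}
    (hf : Continuous fun p : ℝ × ℝ => f p.1 p.2) (a b c d : ℝ) :
    ∫ x in a..b, ∫ y in c..d, f x y = ∫ y in c..d, ∫ x in a..b, f x y := by
  apply intervalIntegral_intervalIntegral_swap
  exact (ContinuousOn.integrableOn_compact (isCompact_uIcc.prod isCompact_uIcc)
    hf.continuousOn).mono_set (prod_mono uIoc_subset_uIcc uIoc_subset_uIcc)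

lemma continuous_integral_of_continuous {X : Type*} [TopologicalSpace X] {f : X → ℝ → ℝ}
    (hf : Continuous fun p : X × ℝ => f p.1 p.2) (a b : ℝ) :
    Continuous fun x => ∫ y in a..b, f x y :=
  intervalIntegral.continuous_parametric_intervalIntegral_of_continuous' hf a b

/-- The divergence theorem on `[0, L] × [-B, B]` for a field `(P, Q)` whose normal component vanishes
on all sides except `x = 0`, where `P = -g`. -/
lemma integral_divergence {L B : ℝ} (hL : 0 < L) (hB : 0 < B) {P P' Q Q' : ℝ → ℝ → ℝ} {g : ℝ → ℝ}
    (hP : ∀ x y, HasDerivAt (fun x' => P x' y) (P' x y) x)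
    (hQ : ∀ x y, HasDerivAt (fun y' => Q x y') (Q' x y) y)
    (hP' : Continuous fun p : ℝ × ℝ => P' p.1 p.2)
    (hQ' : Continuous fun p : ℝ × ℝ => Q' p.1 p.2)
    (hP0 : ∀ y ∈ Ioo (-B) B, P 0 y = -g y) (hPL : ∀ y ∈ Ioo (-B) B, P L y = 0)
    (hQB : ∀ x ∈ Ioo 0 L, Q x (-B) = 0 ∧ Q x B = 0) :
    ∫ x in (0 : ℝ)..L, ∫ y in (-B)..B, (P' x y + Q' x y) = ∫ y in (-B)..B, g y := by
  have hBB : -B ≤ B := by linarith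
  have hPx (x : ℝ) : Continuous (P' x) := hP'.comp (Continuous.prodMk_right x)
  have hPy (y : ℝ) : Continuous fun x => P' x y := hP'.comp (Continuous.prodMk_left y)
  have hQx (x : ℝ) : Continuous (Q' x) := hQ'.comp (Continuous.prodMk_right x)
  have hQ0 : ∫ x in (0 : ℝ)..L, ∫ y in (-B)..B, Q' x y = 0 := by
    refine (intervalIntegral.integral_congr_Ioo_of_le (g := fun _ => 0) hL.le
      fun x hx => ?_).trans intervalIntegral.integral_zero
    rw [intervalIntegral.integral_eq_sub_of_hasDerivAt (fun y _ => hQ x y)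
      ((hQx x).intervalIntegrable _ _), (hQB x hx).1, (hQB x hx).2, sub_zero]
  have hPg : ∫ x in (0 : ℝ)..L, ∫ y in (-B)..B, P' x y = ∫ y in (-B)..B, g y := by
    rw [integral_integral_swap_of_continuous hP']
    refine intervalIntegral.integral_congr_Ioo_of_le hBB fun y hy => ?_
    rw [intervalIntegral.integral_eq_sub_of_hasDerivAt (fun x _ => hP x y)
      ((hPy y).intervalIntegrable _ _), hP0 y hy, hPL y hy, zero_sub, neg_neg]
  calc ∫ x in (0 : ℝ)..L, ∫ y in (-B)..B, (P' x y + Q' x y)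
      = ∫ x in (0 : ℝ)..L, ((∫ y in (-B)..B, P' x y) + ∫ y in (-B)..B, Q' x y) := by
        refine intervalIntegral.integral_congr fun x _ => ?_
        exact intervalIntegral.integral_add ((hPx x).intervalIntegrable _ _)
          ((hQx x).intervalIntegrable _ _)
    _ = ∫ y in (-B)..B, g y := by
        rw [intervalIntegral.integral_add
          ((continuous_integral_of_continuous hP' _ _).intervalIntegrable _ _)
          ((continuous_integral_of_continuous hQ' _ _).intervalIntegrable _ _), hQ0, hPg, add_zero]

/-! ### The energy identity -/

/-- A `C¹` function `Φ` with `Φ 0 = 0` and `Φ' (s) = 2 s |s|^(1+δ)`, used to write the nonlinear term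
`2 u |u|^(1+δ) u_x` as `∂_x Φ(u)`. -/
lemma exists_nonlinear_potential {δ : ℝ} (hδ : 0 ≤ δ) :
    ∃ Φ : ℝ → ℝ, Φ 0 = 0 ∧ ∀ s, HasDerivAt Φ (2 * s * |s| ^ (1 + δ)) s := by
  have hc : Continuous fun s : ℝ => 2 * s * |s| ^ (1 + δ) :=
    (continuous_const.mul continuous_id).mul
      (continuous_abs.rpow_const fun _ => Or.inr (by linarith))
  exact ⟨fun s => ∫ r in (0 : ℝ)..s, 2 * r * |r| ^ (1 + δ), by simp,
    fun s => (hc.integral_hasStrictDerivAt 0 s).hasDerivAt⟩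

/-- The identity differentiated in time: the left side is `d/dτ ∫_Ω u²` at time `τ`. -/
lemma energy_rate
    {L B T δ ε : ℝ} (hL : 0 < L) (hB : 0 < B) (hδ : 0 ≤ δ)
    {u : ℝ → ℝ → ℝ → ℝ} (hu : JointSmooth u)
    (heq : ∀ x ∈ Set.Ioo (0 : ℝ) L, ∀ y ∈ Set.Ioo (-B) B, ∀ t ∈ Set.Ioo (0 : ℝ) T,
      pdt u x y t + pdx u x y t + |u x y t| ^ (1 + δ) * pdx u x y t
        + pdx (pdx (pdx u)) x y t + pdy (pdy (pdx u)) x y t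
        + ε * (pdx (pdx (pdx (pdx u))) x y t + pdy (pdy (pdy (pdy u))) x y t) = 0)
    (hbcY : ∀ x ∈ Set.Ioo (0 : ℝ) L, ∀ t ∈ Set.Icc (0 : ℝ) T,
      u x (-B) t = 0 ∧ u x B t = 0 ∧ pdy (pdy u) x (-B) t = 0 ∧ pdy (pdy u) x B t = 0)
    (hbcX : ∀ y ∈ Set.Ioo (-B) B, ∀ t ∈ Set.Icc (0 : ℝ) T,
      u 0 y t = 0 ∧ u L y t = 0 ∧ pdx (pdx u) 0 y t = 0 ∧ pdx u L y t = 0)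
    {τ : ℝ} (hτ : τ ∈ Ioo 0 T) :
    ∫ x in (0 : ℝ)..L, ∫ y in (-B)..B, 2 * u x y τ * pdt u x y τ
      = -(∫ y in (-B)..B, (pdx u 0 y τ) ^ 2)
        - 2 * ε * ∫ x in (0 : ℝ)..L, ∫ y in (-B)..B,
            ((pdx (pdx u) x y τ) ^ 2 + (pdy (pdy u) x y τ) ^ 2) := by
  obtain ⟨Φ, hΦ0, hΦ⟩ := exists_nonlinear_potential hδ
  have hτ' : τ ∈ Icc 0 T := Ioo_subset_Icc_self hτ
  have hBB : -B ≤ B := by linarith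
  -- Tangential derivatives vanish along the sides on which `u` vanishes.
  have huy0 : ∀ y ∈ Ioo (-B) B, pdy u 0 y τ = 0 := fun y hy => by
    have h : (fun y' => u 0 y' τ) =ᶠ[nhds y] fun _ => 0 := by
      filter_upwards [isOpen_Ioo.mem_nhds hy] with z hz using (hbcX z hz τ hτ').1
    exact h.deriv_eq.trans (deriv_const y 0)
  have huyL : ∀ y ∈ Ioo (-B) B, pdy u L y τ = 0 := fun y hy => by
    have h : (fun y' => u L y' τ) =ᶠ[nhds y] fun _ => 0 := by
      filter_upwards [isOpen_Ioo.mem_nhds hy] with z hz using (hbcX z hz τ hτ').2.1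
    exact h.deriv_eq.trans (deriv_const y 0)
  let P : ℝ → ℝ → ℝ := fun x y =>
    (u x y τ) ^ 2 + Φ (u x y τ) + 2 * (u x y τ * pdx (pdx u) x y τ) - (pdx u x y τ) ^ 2
      - (pdy u x y τ) ^ 2
      + 2 * ε * (u x y τ * pdx (pdx (pdx u)) x y τ - pdx u x y τ * pdx (pdx u) x y τ)
  let Q : ℝ → ℝ → ℝ := fun x y =>
    2 * (u x y τ * pdy (pdx u) x y τ)
      + 2 * ε * (u x y τ * pdy (pdy (pdy u)) x y τ - pdy u x y τ * pdy (pdy u) x y τ)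
  let P' : ℝ → ℝ → ℝ := fun x y =>
    2 * u x y τ * pdx u x y τ + 2 * u x y τ * |u x y τ| ^ (1 + δ) * pdx u x y τ
      + 2 * (u x y τ * pdx (pdx (pdx u)) x y τ) - 2 * pdy u x y τ * pdy (pdx u) x y τ
      + 2 * ε * (u x y τ * pdx (pdx (pdx (pdx u))) x y τ - (pdx (pdx u) x y τ) ^ 2)
  let Q' : ℝ → ℝ → ℝ := fun x y =>
    2 * (pdy u x y τ * pdy (pdx u) x y τ + u x y τ * pdy (pdy (pdx u)) x y τ)
      + 2 * ε * (u x y τ * pdy (pdy (pdy (pdy u))) x y τ - (pdy (pdy u) x y τ) ^ 2)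
  have hP (x y : ℝ) : HasDerivAt (fun x' => P x' y) (P' x y) x := by
    have h0 := hu.hasDerivAt_x x y τ
    have h1 := hu.pdx.hasDerivAt_x x y τ
    have h2 := hu.pdx.pdx.hasDerivAt_x x y τ
    have h3 := hu.pdx.pdx.pdx.hasDerivAt_x x y τ
    have hy := hu.pdy.hasDerivAt_x x y τ
    rw [hu.pdx_pdy_comm] at hy
    have hN := (hΦ (u x y τ)).comp x h0
    refine ((((((h0.pow 2).add hN).add ((h0.mul h2).const_mul 2)).sub (h1.pow 2)).sub
      (hy.pow 2)).add (((h0.mul h3).sub (h1.mul h2)).const_mul (2 * ε))).congr_deriv ?_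
    simp only [P']
    ring
  have hQ (x y : ℝ) : HasDerivAt (fun y' => Q x y') (Q' x y) y := by
    have h0 := hu.hasDerivAt_y x y τ
    have h1 := hu.pdy.hasDerivAt_y x y τ
    have h2 := hu.pdy.pdy.hasDerivAt_y x y τ
    have h3 := hu.pdy.pdy.pdy.hasDerivAt_y x y τ
    have hx := hu.pdx.pdy.hasDerivAt_y x y τ
    refine (((h0.mul hx).const_mul 2).add
      (((h0.mul h3).sub (h1.mul h2)).const_mul (2 * ε))).congr_deriv ?_
    simp only [Q']
    ring
  have hc {v : ℝ → ℝ → ℝ → ℝ} (hv : JointSmooth v) :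
      Continuous fun p : ℝ × ℝ => v p.1 p.2 τ :=
    hv.continuous_comp continuous_fst continuous_snd continuous_const
  have c0 := hc hu
  have c1 := hc hu.pdx
  have c2 := hc hu.pdx.pdx
  have c3 := hc hu.pdx.pdx.pdx
  have c4 := hc hu.pdx.pdx.pdx.pdx
  have d1 := hc hu.pdy
  have d2 := hc hu.pdy.pdy
  have d4 := hc hu.pdy.pdy.pdy.pdy
  have e1 := hc hu.pdx.pdy
  have e2 := hc hu.pdx.pdy.pdy
  have cN : Continuous fun p : ℝ × ℝ => |u p.1 p.2 τ| ^ (1 + δ) :=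
    c0.abs.rpow_const fun _ => Or.inr (by linarith)
  have hP' : Continuous fun p : ℝ × ℝ => P' p.1 p.2 := by
    simp only [P']
    fun_prop
  have hQ' : Continuous fun p : ℝ × ℝ => Q' p.1 p.2 := by
    simp only [Q']
    fun_prop
  have hdiv := integral_divergence hL hB (g := fun y => (pdx u 0 y τ) ^ 2) hP hQ hP' hQ'
    (fun y hy => by
      obtain ⟨h1, -, h3, -⟩ := hbcX y hy τ hτ'
      simp [P, h1, h3, hΦ0, huy0 y hy])
    (fun y hy => by
      obtain ⟨-, h2, -, h4⟩ := hbcX y hy τ hτ'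
      simp [P, h2, h4, hΦ0, huyL y hy])
    (fun x hx => by
      obtain ⟨h1, h2, h3, h4⟩ := hbcY x hx τ hτ'
      simp [Q, h1, h2, h3, h4])
  have cS : Continuous fun p : ℝ × ℝ =>
      (pdx (pdx u) p.1 p.2 τ) ^ 2 + (pdy (pdy u) p.1 p.2 τ) ^ 2 := by fun_prop
  have cD : Continuous fun p : ℝ × ℝ => P' p.1 p.2 + Q' p.1 p.2 := hP'.add hQ'
  rw [← hdiv, ← intervalIntegral.integral_const_mul, ← intervalIntegral.integral_neg,
    ← intervalIntegral.integral_sub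
      ((continuous_integral_of_continuous cD _ _).fun_neg.intervalIntegrable _ _)
      (((continuous_integral_of_continuous cS _ _).const_mul _).intervalIntegrable _ _)]
  refine intervalIntegral.integral_congr_Ioo_of_le hL.le fun x hx => ?_
  have cDx : Continuous fun y => P' x y + Q' x y := cD.comp (Continuous.prodMk_right x)
  have cSx : Continuous fun y => (pdx (pdx u) x y τ) ^ 2 + (pdy (pdy u) x y τ) ^ 2 :=
    cS.comp (Continuous.prodMk_right x)
  rw [← intervalIntegral.integral_const_mul, ← intervalIntegral.integral_neg,
    ← intervalIntegral.integral_sub (cDx.fun_neg.intervalIntegrable _ _)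
      ((cSx.const_mul _).intervalIntegrable _ _)]
  refine intervalIntegral.integral_congr_Ioo_of_le hBB fun y hy => ?_
  simp only [P', Q']
  linear_combination (2 * u x y τ) * heq x hx y hy τ hτ

/-- The fundamental theorem of calculus in time for the energy, with Fubini applied twice. -/
lemma integral_energy_rate {u : ℝ → ℝ → ℝ → ℝ} (hu : JointSmooth u) (a b c d t : ℝ) :
    ∫ τ in (0 : ℝ)..t, ∫ x in a..b, ∫ y in c..d, 2 * u x y τ * pdt u x y τ
      = (∫ x in a..b, ∫ y in c..d, (u x y t) ^ 2) - ∫ x in a..b, ∫ y in c..d, (u x y 0) ^ 2 := by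
  have cF {X : Type} [TopologicalSpace X] {f g h : X → ℝ} (hf : Continuous f) (hg : Continuous g)
      (hh : Continuous h) :
      Continuous fun z => 2 * u (f z) (g z) (h z) * pdt u (f z) (g z) (h z) :=
    (continuous_const.mul (hu.continuous_comp hf hg hh)).mul (hu.pdt.continuous_comp hf hg hh)
  have cI : Continuous fun p : ℝ × ℝ => ∫ y in c..d, 2 * u p.2 y p.1 * pdt u p.2 y p.1 :=
    continuous_integral_of_continuous (f := fun (p : ℝ × ℝ) y => 2 * u p.2 y p.1 * pdt u p.2 y p.1)
      (cF (by fun_prop) (by fun_prop) (by fun_prop)) _ _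
  have cU (s : ℝ) : Continuous fun p : ℝ × ℝ => (u p.1 p.2 s) ^ 2 :=
    (hu.continuous_comp continuous_fst continuous_snd continuous_const).pow 2
  have cUx (s x : ℝ) : Continuous fun y => (u x y s) ^ 2 :=
    (hu.continuous_comp continuous_const continuous_id continuous_const).pow 2
  rw [integral_integral_swap_of_continuous cI, ← intervalIntegral.integral_sub
    ((continuous_integral_of_continuous (cU t) _ _).intervalIntegrable _ _)
    ((continuous_integral_of_continuous (cU 0) _ _).intervalIntegrable _ _)]
  refine intervalIntegral.integral_congr fun x _ => ?_
  rw [integral_integral_swap_of_continuous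
      (f := fun τ y => 2 * u x y τ * pdt u x y τ) (cF (by fun_prop) (by fun_prop) (by fun_prop)),
    ← intervalIntegral.integral_sub
      ((cUx t x).intervalIntegrable _ _) ((cUx 0 x).intervalIntegrable _ _)]
  refine intervalIntegral.integral_congr fun y _ => ?_
  refine intervalIntegral.integral_eq_sub_of_hasDerivAt (f := fun τ => (u x y τ) ^ 2)
    (fun τ _ => ?_) ((cF (by fun_prop) (by fun_prop) (by fun_prop)).intervalIntegrable _ _)
  exact ((hu.hasDerivAt_t x y τ).pow 2).congr_deriv (by ring)

/-- The global energy identity for the fourth-order parabolic regularization of the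
generalized Zakharov–Kuznetsov equation
`u_t + u_x + |u|^{1+δ}u_x + u_{xxx} + u_{xyy} + ε(∂_x⁴u + ∂_y⁴u) = 0` on the
rectangle `Ω = (0,L) × (-B,B)`:
`‖u(t)‖² + ∫₀ᵗ∫ u_x²(0,y,τ) dy dτ + 2ε ∫₀ᵗ∫_Ω (u_xx² + u_yy²) = ‖u(0)‖²`. -/
theorem gZK_regularized_energy_identity
    (L B T δ ε : ℝ) (hL : 0 < L) (hB : 0 < B) (hT : 0 < T)
    (hδ : δ ∈ Set.Icc (0 : ℝ) 1) (hε : 0 < ε)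
    (u : ℝ → ℝ → ℝ → ℝ)
    (hu : ContDiff ℝ (⊤ : ℕ∞) (fun p : ℝ × ℝ × ℝ => u p.1 p.2.1 p.2.2))
    (heq : ∀ x ∈ Set.Ioo (0 : ℝ) L, ∀ y ∈ Set.Ioo (-B) B, ∀ t ∈ Set.Ioo (0 : ℝ) T,
      pdt u x y t + pdx u x y t + |u x y t| ^ (1 + δ) * pdx u x y t
        + pdx (pdx (pdx u)) x y t + pdy (pdy (pdx u)) x y t
        + ε * (pdx (pdx (pdx (pdx u))) x y t + pdy (pdy (pdy (pdy u))) x y t) = 0)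
    (hbcY : ∀ x ∈ Set.Ioo (0 : ℝ) L, ∀ t ∈ Set.Icc (0 : ℝ) T,
      u x (-B) t = 0 ∧ u x B t = 0 ∧ pdy (pdy u) x (-B) t = 0 ∧ pdy (pdy u) x B t = 0)
    (hbcX : ∀ y ∈ Set.Ioo (-B) B, ∀ t ∈ Set.Icc (0 : ℝ) T,
      u 0 y t = 0 ∧ u L y t = 0 ∧ pdx (pdx u) 0 y t = 0 ∧ pdx u L y t = 0) :
    ∀ t ∈ Set.Icc (0 : ℝ) T,
      (∫ x in (0:ℝ)..L, ∫ y in (-B)..B, (u x y t) ^ 2)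
        + (∫ τ in (0:ℝ)..t, ∫ y in (-B)..B, (pdx u 0 y τ) ^ 2)
        + 2 * ε * (∫ τ in (0:ℝ)..t, ∫ x in (0:ℝ)..L, ∫ y in (-B)..B,
            ((pdx (pdx u) x y τ) ^ 2 + (pdy (pdy u) x y τ) ^ 2))
      = ∫ x in (0:ℝ)..L, ∫ y in (-B)..B, (u x y 0) ^ 2 := by
  intro t ht
  have hs : JointSmooth u := hu
  have cG : Continuous fun τ => ∫ y in (-B)..B, (pdx u 0 y τ) ^ 2 :=
    continuous_integral_of_continuous (f := fun τ y => (pdx u 0 y τ) ^ 2)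
      ((hs.pdx.continuous_comp continuous_const continuous_snd continuous_fst).pow 2) _ _
  have cS : Continuous fun τ => ∫ x in (0:ℝ)..L, ∫ y in (-B)..B,
      ((pdx (pdx u) x y τ) ^ 2 + (pdy (pdy u) x y τ) ^ 2) := by
    refine continuous_integral_of_continuous (f := fun τ x => ∫ y in (-B)..B,
      ((pdx (pdx u) x y τ) ^ 2 + (pdy (pdy u) x y τ) ^ 2)) ?_ _ _
    refine continuous_integral_of_continuous (f := fun (p : ℝ × ℝ) y =>
      ((pdx (pdx u) p.2 y p.1) ^ 2 + (pdy (pdy u) p.2 y p.1) ^ 2)) ?_ _ _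
    exact ((hs.pdx.pdx.continuous_comp (by fun_prop) (by fun_prop) (by fun_prop)).pow 2).add
      ((hs.pdy.pdy.continuous_comp (by fun_prop) (by fun_prop) (by fun_prop)).pow 2)
  have hrate : ∫ τ in (0:ℝ)..t, ∫ x in (0:ℝ)..L, ∫ y in (-B)..B, 2 * u x y τ * pdt u x y τ
      = ∫ τ in (0:ℝ)..t, (-(∫ y in (-B)..B, (pdx u 0 y τ) ^ 2)
        - 2 * ε * ∫ x in (0:ℝ)..L, ∫ y in (-B)..B,
            ((pdx (pdx u) x y τ) ^ 2 + (pdy (pdy u) x y τ) ^ 2)) :=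
    intervalIntegral.integral_congr_Ioo_of_le ht.1 fun τ hτ =>
      energy_rate hL hB hδ.1 hs heq hbcY hbcX ⟨hτ.1, hτ.2.trans_le ht.2⟩
  rw [integral_energy_rate hs, intervalIntegral.integral_sub (cG.fun_neg.intervalIntegrable _ _)
    ((cS.const_mul _).intervalIntegrable _ _), intervalIntegral.integral_neg,
    intervalIntegral.integral_const_mul] at hrate
  linarith
end

section
/- Let L, B, T > 0, ε ∈ (0,1/2), Ω = (0,L) × (−B,B), and let u be a smooth function on [0,L] × [−B,B] × [0,T] satisfying the regularized modified Zakharov–Kuznetsov equation u_t + u_x + u² u_x + u_{xxx} + u_{xyy} + ε(∂_x⁴u + ∂_y⁴u) = 0 on Ω × (0,T), with boundary conditions u(x,±B,t) = ∂_y²u(x,±B,t) = 0 for x ∈ (0,L), and u(0,y,t) = u(L,y,t) = ∂_x²u(0,y,t) = ∂_x u(L,y,t) = 0 for y ∈ (−B,B). Then for every t ∈ (0,T), (d/dt) ∫_Ω (1+x) u²(t) dx dy + ∫_Ω |∇u(t)|² dx dy + 2 ∫_Ω u_x²(t) dx dy + (1 − 2ε) ∫_{−B}^{B} u_x²(0,y,t)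 dy ≤ ∫_Ω u²(t) dx dy + (1/2) ∫_Ω u⁴(t) dx dy. -/
/-!
Fix `t` and write `w = u(·,·,t)`. Multiplying the spatial part of the equation by `2(1+x)w` gives
a pointwise divergence identity

`2(1+x)w·(…) = F_x + G_y - w² - w⁴/2 + 3w_x² + w_y² + 2ε(1+x)(w_xx² + w_yy²)`

with

* `F = (1+x)(w² + w⁴/2 + 2w w_xx - w_x² - w_y²) - 2w w_x
      + 2ε((1+x)w w_xxx - (w + (1+x)w_x)w_xx + w_x²)`,
* `G = 2(1+x)w w_xy + 2ε(1+x)(w w_yyy - w_y w_yy)`.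

The boundary conditions make `G` vanish at `y = ±B` and `F` vanish at `x = L`, while
`F(0,y) = -(1-2ε)w_x(0,y)²`. Integrating over the rectangle and dropping the nonnegative
second-order terms gives the estimate (`weighted_ineq`), since `∫∫ 2(1+x)u u_t` is the time
derivative of `∫∫ (1+x)u²` (`hasDerivAt_param`, applied once in each variable). The terms of the
divergence are integrated by the fundamental theorem of calculus, together with Fubini for `F_x`
(`integral_dx`, `integral_dy`).
-/

open MeasureTheory Real Set

open scoped ContDiff

/-! ### Partial derivatives of smooth functions -/

/-- `v = v(x,y,t)` is jointly `C^∞` on all of `ℝ³`. -/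
def Sm (v : ℝ → ℝ → ℝ → ℝ) : Prop := ContDiff ℝ ∞ (fun p : ℝ × ℝ × ℝ => v p.1 p.2.1 p.2.2)

namespace Sm
variable {v : ℝ → ℝ → ℝ → ℝ}

theorem fderivAt (h : Sm v) (p : ℝ × ℝ × ℝ) :
    HasFDerivAt (fun p : ℝ × ℝ × ℝ => v p.1 p.2.1 p.2.2)
      (fderiv ℝ (fun p : ℝ × ℝ × ℝ => v p.1 p.2.1 p.2.2) p) p :=
  (ContDiff.differentiable h (by simp) p).hasFDerivAt

theorem aux_x (h : Sm v) (x y t : ℝ) : HasDerivAt (fun x' => v x' y t)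
    (fderiv ℝ (fun p : ℝ × ℝ × ℝ => v p.1 p.2.1 p.2.2) (x, y, t) (1, 0, 0)) x :=
  (h.fderivAt (x, y, t)).comp_hasDerivAt x (f := fun x' : ℝ => (x', y, t))
    ((hasDerivAt_id x).prodMk (hasDerivAt_const x (y, t)))

theorem aux_y (h : Sm v) (x y t : ℝ) : HasDerivAt (fun y' => v x y' t)
    (fderiv ℝ (fun p : ℝ × ℝ × ℝ => v p.1 p.2.1 p.2.2) (x, y, t) (0, 1, 0)) y :=
  (h.fderivAt (x, y, t)).comp_hasDerivAt y (f := fun y' : ℝ => (x, y', t))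
    ((hasDerivAt_const y x).prodMk ((hasDerivAt_id y).prodMk (hasDerivAt_const y t)))

theorem aux_t (h : Sm v) (x y t : ℝ) : HasDerivAt (fun t' => v x y t')
    (fderiv ℝ (fun p : ℝ × ℝ × ℝ => v p.1 p.2.1 p.2.2) (x, y, t) (0, 0, 1)) t :=
  (h.fderivAt (x, y, t)).comp_hasDerivAt t (f := fun t' : ℝ => (x, y, t'))
    ((hasDerivAt_const t x).prodMk ((hasDerivAt_const t y).prodMk (hasDerivAt_id t)))

theorem hx (h : Sm v) (x y t : ℝ) : HasDerivAt (fun x' => v x' y t) (pdx v x y t) x :=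
  (h.aux_x x y t).differentiableAt.hasDerivAt

theorem hy (h : Sm v) (x y t : ℝ) : HasDerivAt (fun y' => v x y' t) (pdy v x y t) y :=
  (h.aux_y x y t).differentiableAt.hasDerivAt

theorem ht (h : Sm v) (x y t : ℝ) : HasDerivAt (fun t' => v x y t') (pdt v x y t) t :=
  (h.aux_t x y t).differentiableAt.hasDerivAt

theorem dir (h : Sm v) (e : ℝ × ℝ × ℝ) : ContDiff ℝ ∞ (fun p : ℝ × ℝ × ℝ =>
    fderiv ℝ (fun p : ℝ × ℝ × ℝ => v p.1 p.2.1 p.2.2) p e) :=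
  (ContDiff.fderiv_right h (m := ∞) (by simp)).clm_apply contDiff_const

theorem dx (h : Sm v) : Sm (pdx v) :=
  (congrArg (ContDiff ℝ ∞) (funext fun p : ℝ × ℝ × ℝ =>
    (h.aux_x p.1 p.2.1 p.2.2).deriv)).mpr (h.dir (1, 0, 0))

theorem dy (h : Sm v) : Sm (pdy v) :=
  (congrArg (ContDiff ℝ ∞) (funext fun p : ℝ × ℝ × ℝ =>
    (h.aux_y p.1 p.2.1 p.2.2).deriv)).mpr (h.dir (0, 1, 0))

theorem dt (h : Sm v) : Sm (pdt v) :=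
  (congrArg (ContDiff ℝ ∞) (funext fun p : ℝ × ℝ × ℝ =>
    (h.aux_t p.1 p.2.1 p.2.2).deriv)).mpr (h.dir (0, 0, 1))

/-- Equality of mixed partial derivatives. -/
theorem pdx_pdy (h : Sm v) : pdx (pdy v) = pdy (pdx v) := by
  funext x y t
  have hsymm := (ContDiff.contDiffAt h (x := (x, y, t))).isSymmSndFDerivAt
    (by simpa using (WithTop.coe_le_coe.2 le_top : (2 : WithTop ℕ∞) ≤ ∞))
  have hd : HasFDerivAt (fderiv ℝ (fun p : ℝ × ℝ × ℝ => v p.1 p.2.1 p.2.2))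
      (fderiv ℝ (fderiv ℝ (fun p : ℝ × ℝ × ℝ => v p.1 p.2.1 p.2.2)) (x, y, t)) (x, y, t) :=
    ((ContDiff.fderiv_right h (m := ∞) (by simp)).differentiable (by simp) _).hasFDerivAt
  have ex : pdx v = fun x y t =>
      fderiv ℝ (fun p : ℝ × ℝ × ℝ => v p.1 p.2.1 p.2.2) (x, y, t) (1, 0, 0) := by
    funext x y t; exact (h.aux_x x y t).deriv
  have ey : pdy v = fun x y t =>
      fderiv ℝ (fun p : ℝ × ℝ × ℝ => v p.1 p.2.1 p.2.2) (x, y, t) (0, 1, 0) := by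
    funext x y t; exact (h.aux_y x y t).deriv
  have h1 := ((hd.comp_hasDerivAt x (f := fun x' : ℝ => (x', y, t))
    ((hasDerivAt_id x).prodMk (hasDerivAt_const x (y, t)))).clm_apply
      (hasDerivAt_const x ((0 : ℝ), (1 : ℝ), (0 : ℝ)))).deriv
  have h2 := ((hd.comp_hasDerivAt y (f := fun y' : ℝ => (x, y', t))
    ((hasDerivAt_const y x).prodMk ((hasDerivAt_id y).prodMk (hasDerivAt_const y t)))).clm_apply
      (hasDerivAt_const y ((1 : ℝ), (0 : ℝ), (0 : ℝ)))).deriv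
  rw [ex, ey]
  simp only [pdx, pdy]
  refine h1.trans (Eq.trans ?_ h2.symm)
  have h3 := hsymm.eq (1, 0, 0) (0, 1, 0)
  simp only [map_zero, add_zero]
  exact h3

theorem cont (h : Sm v) : Continuous (fun p : ℝ × ℝ × ℝ => v p.1 p.2.1 p.2.2) :=
  ContDiff.continuous h

theorem slice (h : Sm v) (t : ℝ) : Continuous (Function.uncurry fun x y => v x y t) :=
  h.cont.comp (f := fun q : ℝ × ℝ => (q.1, q.2, t)) (by fun_prop)
end Sm

/-! ### Integrals over the rectangle -/

/-- Differentiation under the integral sign over a compact interval: the jointly continuous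
derivative is bounded near `t`, so dominated convergence applies. -/
theorem hasDerivAt_param {f f' : ℝ → ℝ → ℝ} (hf : Continuous (Function.uncurry f))
    (hf' : Continuous (Function.uncurry f')) (h : ∀ s x, HasDerivAt (fun s => f s x) (f' s x) s)
    (a b t : ℝ) : HasDerivAt (fun s => ∫ x in a..b, f s x) (∫ x in a..b, f' t x) t := by
  obtain ⟨C, hC⟩ := ((isCompact_closedBall t 1).prod
    (isCompact_uIcc (a := a) (b := b))).exists_bound_of_continuousOn hf'.continuousOn
  refine (intervalIntegral.hasDerivAt_integral_of_dominated_loc_of_deriv_le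
    (F' := f') (bound := fun _ => C)
    (Metric.closedBall_mem_nhds t one_pos) ?_ ?_ ?_ ?_ ?_ ?_).2
  · exact Filter.Eventually.of_forall fun s => (by fun_prop : Continuous (f s)).aestronglyMeasurable
  · exact (by fun_prop : Continuous (f t)).intervalIntegrable _ _
  · exact (by fun_prop : Continuous (f' t)).aestronglyMeasurable
  · exact Filter.Eventually.of_forall fun x hx s hs => hC (s, x) ⟨hs, uIoc_subset_uIcc hx⟩
  · exact intervalIntegrable_const
  · exact Filter.Eventually.of_forall fun x hx s hs => h s x

theorem II_add {f g : ℝ → ℝ → ℝ} (hf : Continuous (Function.uncurry f))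
    (hg : Continuous (Function.uncurry g)) (a b c d : ℝ) :
    (∫ x in a..b, ∫ y in c..d, (f x y + g x y)) =
      (∫ x in a..b, ∫ y in c..d, f x y) + ∫ x in a..b, ∫ y in c..d, g x y := by
  rw [← intervalIntegral.integral_add]
  · congr 1; ext x
    exact intervalIntegral.integral_add ((by fun_prop : Continuous (f x)).intervalIntegrable _ _)
      ((by fun_prop : Continuous (g x)).intervalIntegrable _ _)
  · exact Continuous.intervalIntegrable (by fun_prop) _ _
  · exact Continuous.intervalIntegrable (by fun_prop) _ _
theorem integral_dx {F F' : ℝ → ℝ → ℝ} (hF' : Continuous (Function.uncurry F'))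
    (h : ∀ x y, HasDerivAt (fun x' => F x' y) (F' x y) x) (a b c d : ℝ) :
    (∫ x in a..b, ∫ y in c..d, F' x y) = ∫ y in c..d, (F b y - F a y) := by
  rw [MeasureTheory.intervalIntegral_intervalIntegral_swap]
  · congr 1; ext y
    exact intervalIntegral.integral_eq_sub_of_hasDerivAt (fun x _ => h x y)
      (Continuous.intervalIntegrable (by fun_prop) _ _)
  · exact (hF'.continuousOn.integrableOn_compact
      (isCompact_uIcc.prod isCompact_uIcc)).mono_set
        (Set.prod_mono uIoc_subset_uIcc uIoc_subset_uIcc)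

theorem integral_dy {G G' : ℝ → ℝ → ℝ} (hG' : Continuous (Function.uncurry G'))
    (h : ∀ x y, HasDerivAt (fun y' => G x y') (G' x y) y) (a b c d : ℝ) :
    (∫ x in a..b, ∫ y in c..d, G' x y) = ∫ x in a..b, (G x d - G x c) := by
  congr 1; ext x
  exact intervalIntegral.integral_eq_sub_of_hasDerivAt (fun y _ => h x y)
    (Continuous.intervalIntegrable (by fun_prop) _ _)

theorem II_nonpos {f : ℝ → ℝ → ℝ} (hf : Continuous (Function.uncurry f)) {a b c d : ℝ}
    (hab : a ≤ b) (hcd : c ≤ d) (h : ∀ x ∈ Ioo a b, ∀ y ∈ Ioo c d, f x y ≤ 0) :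
    (∫ x in a..b, ∫ y in c..d, f x y) ≤ 0 := by
  have key : ∀ x ∈ Ioo a b, (∫ y in c..d, f x y) ≤ 0 := fun x hx => by
    simpa using intervalIntegral.integral_mono_on_of_le_Ioo (g := fun _ => (0 : ℝ)) (μ := volume)
      hcd (Continuous.intervalIntegrable (by fun_prop) _ _) intervalIntegrable_const (h x hx)
  simpa using intervalIntegral.integral_mono_on_of_le_Ioo (g := fun _ => (0 : ℝ)) (μ := volume)
    hab (Continuous.intervalIntegrable (by fun_prop) _ _) intervalIntegrable_const key

theorem II_sum_nonpos {f₁ f₂ f₃ f₄ f₅ f₆ f₇ : ℝ → ℝ → ℝ}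
    (h₁ : Continuous (Function.uncurry f₁)) (h₂ : Continuous (Function.uncurry f₂))
    (h₃ : Continuous (Function.uncurry f₃)) (h₄ : Continuous (Function.uncurry f₄))
    (h₅ : Continuous (Function.uncurry f₅)) (h₆ : Continuous (Function.uncurry f₆))
    (h₇ : Continuous (Function.uncurry f₇)) {a b c d : ℝ} (hab : a ≤ b) (hcd : c ≤ d)
    (h : ∀ x ∈ Ioo a b, ∀ y ∈ Ioo c d,
      f₁ x y + (f₂ x y + (f₃ x y + (f₄ x y + (f₅ x y + (f₆ x y + f₇ x y))))) ≤ 0) :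
    (∫ x in a..b, ∫ y in c..d, f₁ x y) + ((∫ x in a..b, ∫ y in c..d, f₂ x y) +
      ((∫ x in a..b, ∫ y in c..d, f₃ x y) + ((∫ x in a..b, ∫ y in c..d, f₄ x y) +
      ((∫ x in a..b, ∫ y in c..d, f₅ x y) + ((∫ x in a..b, ∫ y in c..d, f₆ x y) +
      ∫ x in a..b, ∫ y in c..d, f₇ x y))))) ≤ 0 := by
  have key := II_nonpos (by fun_prop) hab hcd h
  rwa [II_add h₁ (by fun_prop), II_add h₂ (by fun_prop), II_add h₃ (by fun_prop),
    II_add h₄ (by fun_prop), II_add h₅ (by fun_prop), II_add h₆ h₇] at key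

/-! ### The weighted estimate on a time slice -/

/-- The weighted estimate at a fixed time. Here `w` is the slice `u(·,·,t)`, `wt` stands for `u_t`,
and `w1, …, w4` are the pure `x`-derivatives, `v1, …, v4` the pure `y`-derivatives, `m = w_xy`
and `n = w_xyy`. -/
theorem weighted_ineq (L B ε : ℝ) (hL : 0 < L) (hB : 0 < B) (hε : 0 < ε)
    (w wt w1 w2 w3 w4 v1 v2 v3 v4 m n : ℝ → ℝ → ℝ)
    (cw : Continuous (Function.uncurry w)) (cwt : Continuous (Function.uncurry wt))
    (c1 : Continuous (Function.uncurry w1)) (c2 : Continuous (Function.uncurry w2))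
    (c3 : Continuous (Function.uncurry w3)) (c4 : Continuous (Function.uncurry w4))
    (d1 : Continuous (Function.uncurry v1)) (d2 : Continuous (Function.uncurry v2))
    (d3 : Continuous (Function.uncurry v3)) (d4 : Continuous (Function.uncurry v4))
    (cm : Continuous (Function.uncurry m)) (cn : Continuous (Function.uncurry n))
    (hw1 : ∀ x y, HasDerivAt (fun x' => w x' y) (w1 x y) x)
    (hw2 : ∀ x y, HasDerivAt (fun x' => w1 x' y) (w2 x y) x)
    (hw3 : ∀ x y, HasDerivAt (fun x' => w2 x' y) (w3 x y) x)
    (hw4 : ∀ x y, HasDerivAt (fun x' => w3 x' y) (w4 x y) x)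
    (hv1 : ∀ x y, HasDerivAt (fun y' => w x y') (v1 x y) y)
    (hv2 : ∀ x y, HasDerivAt (fun y' => v1 x y') (v2 x y) y)
    (hv3 : ∀ x y, HasDerivAt (fun y' => v2 x y') (v3 x y) y)
    (hv4 : ∀ x y, HasDerivAt (fun y' => v3 x y') (v4 x y) y)
    (hm : ∀ x y, HasDerivAt (fun x' => v1 x' y) (m x y) x)
    (hn : ∀ x y, HasDerivAt (fun y' => m x y') (n x y) y)
    (heq : ∀ x ∈ Ioo 0 L, ∀ y ∈ Ioo (-B) B, wt x y + w1 x y + w x y ^ 2 * w1 x y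
      + w3 x y + n x y + ε * (w4 x y + v4 x y) = 0)
    (hY : ∀ x ∈ Ioo 0 L, w x (-B) = 0 ∧ w x B = 0 ∧ v2 x (-B) = 0 ∧ v2 x B = 0)
    (hX : ∀ y ∈ Ioo (-B) B, w 0 y = 0 ∧ w L y = 0 ∧ w2 0 y = 0 ∧ w1 L y = 0
      ∧ v1 0 y = 0 ∧ v1 L y = 0) :
    (∫ x in (0:ℝ)..L, ∫ y in (-B)..B, (1 + x) * (2 * w x y * wt x y))
      + (∫ x in (0:ℝ)..L, ∫ y in (-B)..B, (w1 x y ^ 2 + v1 x y ^ 2))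
      + 2 * (∫ x in (0:ℝ)..L, ∫ y in (-B)..B, w1 x y ^ 2)
      + (1 - 2 * ε) * (∫ y in (-B)..B, w1 0 y ^ 2)
    ≤ (∫ x in (0:ℝ)..L, ∫ y in (-B)..B, w x y ^ 2)
      + (1 / 2) * ∫ x in (0:ℝ)..L, ∫ y in (-B)..B, w x y ^ 4 := by
  have hBB : -B ≤ B := by linarith
  -- The integrands of `cF'` and `cG'` are `F_x` and `G_y` written out with the product rule.
  have cF' : Continuous (Function.uncurry fun x y =>
      w x y ^ 2 + 1 / 2 * w x y ^ 4 + 2 * (w x y * w2 x y) - w1 x y ^ 2 - v1 x y ^ 2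
      + (1 + x) * (2 * w x y * w1 x y + 2 * w x y ^ 3 * w1 x y
        + 2 * (w1 x y * w2 x y + w x y * w3 x y) - 2 * w1 x y * w2 x y - 2 * v1 x y * m x y)
      - 2 * (w1 x y * w1 x y + w x y * w2 x y)
      + 2 * ε * (w x y * w3 x y + (1 + x) * (w1 x y * w3 x y + w x y * w4 x y)
        - ((w1 x y + w1 x y + (1 + x) * w2 x y) * w2 x y + (w x y + (1 + x) * w1 x y) * w3 x y)
        + 2 * w1 x y * w2 x y)) := by fun_prop
  have cG' : Continuous (Function.uncurry fun x y => (1 + x) * (2 * (v1 x y * m x y + w x y * n x y)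
      + 2 * ε * (v1 x y * v3 x y + w x y * v4 x y - (v2 x y * v2 x y + v1 x y * v3 x y)))) := by
    fun_prop
  have hFx := integral_dx cF'
    (F := fun x y => (1 + x) * (w x y ^ 2 + 1 / 2 * w x y ^ 4 + 2 * (w x y * w2 x y)
        - w1 x y ^ 2 - v1 x y ^ 2) - 2 * (w x y * w1 x y)
      + 2 * ε * ((1 + x) * (w x y * w3 x y) - (w x y + (1 + x) * w1 x y) * w2 x y + w1 x y ^ 2))
    (fun x y => by
      have hid : HasDerivAt (fun x' : ℝ => 1 + x') 1 x := (hasDerivAt_id x).const_add 1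
      have e0 := hw1 x y
      have e1 := hw2 x y
      have e2 := hw3 x y
      have e3 := hw4 x y
      have f1 := hm x y
      refine HasDerivAt.congr_deriv (((hid.mul (((((e0.pow 2).add ((e0.pow 4).const_mul (1 / 2))).add
        ((e0.mul e2).const_mul 2)).sub (e1.pow 2)).sub (f1.pow 2))).sub
          ((e0.mul e1).const_mul 2)).add
        ((((hid.mul (e0.mul e3)).sub ((e0.add (hid.mul e1)).mul e2)).add
          (e1.pow 2)).const_mul (2 * ε))) ?_
      simp only [Pi.add_apply, Pi.mul_apply, Pi.pow_apply, Pi.sub_apply]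
      push_cast
      ring)
    0 L (-B) B
  have hGy := integral_dy cG'
    (G := fun x y => (1 + x) * (2 * (w x y * m x y) + 2 * ε * (w x y * v3 x y - v1 x y * v2 x y)))
    (fun x y => (((((hv1 x y).mul (hn x y)).const_mul 2).add
      ((((hv1 x y).mul (hv4 x y)).sub ((hv2 x y).mul (hv3 x y))).const_mul (2 * ε))).const_mul
        (1 + x)))
    0 L (-B) B
  have hFx' := hFx.trans ((intervalIntegral.integral_congr_Ioo_of_le hBB
    (g := fun y => (1 - 2 * ε) * w1 0 y ^ 2) (fun y hy => by
      obtain ⟨h1, h2, h3, h4, h5, h6⟩ := hX y hy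
      simp only [h1, h2, h3, h4, h5, h6]
      ring)).trans (intervalIntegral.integral_const_mul _ _))
  have hGy' := hGy.trans ((intervalIntegral.integral_congr_Ioo_of_le hL.le
    (g := fun _ => (0 : ℝ)) (fun x hx => by
      obtain ⟨h1, h2, h3, h4⟩ := hY x hx
      simp only [h1, h2, h3, h4]
      ring)).trans intervalIntegral.integral_zero)
  have hmain := II_sum_nonpos (a := 0) (b := L) (c := -B) (d := B)
    (f₁ := fun x y => (1 + x) * (2 * w x y * wt x y))
    (f₂ := fun x y => w1 x y ^ 2 + v1 x y ^ 2)
    (f₃ := fun x y => 2 * w1 x y ^ 2)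
    (f₄ := fun x y => -1 * w x y ^ 2)
    (f₅ := fun x y => -(1 / 2) * w x y ^ 4)
    (by fun_prop) (by fun_prop) (by fun_prop) (by fun_prop) (by fun_prop) cF' cG' hL.le hBB
    (fun x hx y hy => by
      have hx0 : 0 ≤ 1 + x := by linarith [hx.1]
      -- The second-order term produced by the regularization, discarded by its sign.
      have hpos : 0 ≤ 2 * ε * (1 + x) * (w2 x y ^ 2 + v2 x y ^ 2) := by positivity
      linear_combination hpos + 2 * (1 + x) * w x y * heq x hx y hy)
  rw [hFx', hGy'] at hmain
  simp only [intervalIntegral.integral_const_mul _ (fun y => w1 _ y ^ 2),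
    intervalIntegral.integral_const_mul _ (fun y => w _ y ^ 2),
    intervalIntegral.integral_const_mul _ (fun y => w _ y ^ 4),
    intervalIntegral.integral_const_mul _ (fun x => ∫ y in (-B)..B, w1 x y ^ 2),
    intervalIntegral.integral_const_mul _ (fun x => ∫ y in (-B)..B, w x y ^ 2),
    intervalIntegral.integral_const_mul _ (fun x => ∫ y in (-B)..B, w x y ^ 4)] at hmain
  linarith

/-- A priori weighted estimate for the parabolic regularization of the modified
Zakharov–Kuznetsov equation
`u_t + u_x + u²u_x + u_{xxx} + u_{xyy} + ε(∂_x⁴u + ∂_y⁴u) = 0`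
on the rectangle `Ω = (0,L) × (-B,B)`, `ε ∈ (0,1/2)`:
`(d/dt)∫(1+x)u² + ∫|∇u|² + 2∫u_x² + (1−2ε)∫u_x²(0,y,t) dy ≤ ∫u² + (1/2)∫u⁴`. -/
theorem mZK_regularized_weighted_estimate
    (L B T ε : ℝ) (hL : 0 < L) (hB : 0 < B) (hT : 0 < T)
    (hε : ε ∈ Set.Ioo (0 : ℝ) (1 / 2))
    (u : ℝ → ℝ → ℝ → ℝ)
    (hu : ContDiff ℝ (⊤ : ℕ∞) (fun p : ℝ × ℝ × ℝ => u p.1 p.2.1 p.2.2))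
    (heq : ∀ x ∈ Set.Ioo (0 : ℝ) L, ∀ y ∈ Set.Ioo (-B) B, ∀ t ∈ Set.Ioo (0 : ℝ) T,
      pdt u x y t + pdx u x y t + (u x y t) ^ 2 * pdx u x y t
        + pdx (pdx (pdx u)) x y t + pdy (pdy (pdx u)) x y t
        + ε * (pdx (pdx (pdx (pdx u))) x y t + pdy (pdy (pdy (pdy u))) x y t) = 0)
    (hbcY : ∀ x ∈ Set.Ioo (0 : ℝ) L, ∀ t ∈ Set.Icc (0 : ℝ) T,
      u x (-B) t = 0 ∧ u x B t = 0 ∧ pdy (pdy u) x (-B) t = 0 ∧ pdy (pdy u) x B t = 0)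
    (hbcX : ∀ y ∈ Set.Ioo (-B) B, ∀ t ∈ Set.Icc (0 : ℝ) T,
      u 0 y t = 0 ∧ u L y t = 0 ∧ pdx (pdx u) 0 y t = 0 ∧ pdx u L y t = 0) :
    ∀ t ∈ Set.Ioo (0 : ℝ) T,
      deriv (fun s => ∫ x in (0:ℝ)..L, ∫ y in (-B)..B, (1 + x) * (u x y s) ^ 2) t
        + (∫ x in (0:ℝ)..L, ∫ y in (-B)..B, ((pdx u x y t) ^ 2 + (pdy u x y t) ^ 2))
        + 2 * (∫ x in (0:ℝ)..L, ∫ y in (-B)..B, (pdx u x y t) ^ 2)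
        + (1 - 2 * ε) * (∫ y in (-B)..B, (pdx u 0 y t) ^ 2)
      ≤ (∫ x in (0:ℝ)..L, ∫ y in (-B)..B, (u x y t) ^ 2)
        + (1 / 2) * ∫ x in (0:ℝ)..L, ∫ y in (-B)..B, (u x y t) ^ 4 := by
  intro t ht
  have htI : t ∈ Icc (0 : ℝ) T := Ioo_subset_Icc_self ht
  have hs : Sm u := hu
  have cu := hs.cont
  have cut := hs.dt.cont
  have hderiv : HasDerivAt (fun s => ∫ x in (0:ℝ)..L, ∫ y in (-B)..B, (1 + x) * (u x y s) ^ 2)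
      (∫ x in (0:ℝ)..L, ∫ y in (-B)..B, (1 + x) * (2 * u x y t * pdt u x y t)) t := by
    have c0 : Continuous fun q : (ℝ × ℝ) × ℝ => (1 + q.1.2) * (u q.1.2 q.2 q.1.1) ^ 2 := by
      have := cu.comp (f := fun q : (ℝ × ℝ) × ℝ => (q.1.2, q.2, q.1.1)) (by fun_prop)
      exact (by fun_prop : Continuous fun q : (ℝ × ℝ) × ℝ => 1 + q.1.2).mul (this.pow 2)
    have c1 : Continuous fun q : (ℝ × ℝ) × ℝ =>
        (1 + q.1.2) * (2 * u q.1.2 q.2 q.1.1 * pdt u q.1.2 q.2 q.1.1) := by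
      have h0 := cu.comp (f := fun q : (ℝ × ℝ) × ℝ => (q.1.2, q.2, q.1.1)) (by fun_prop)
      have h1 := cut.comp (f := fun q : (ℝ × ℝ) × ℝ => (q.1.2, q.2, q.1.1)) (by fun_prop)
      exact (by fun_prop : Continuous fun q : (ℝ × ℝ) × ℝ => 1 + q.1.2).mul
        ((continuous_const.mul h0).mul h1)
    refine hasDerivAt_param
      (f := fun s x => ∫ y in (-B)..B, (1 + x) * (u x y s) ^ 2)
      (f' := fun s x => ∫ y in (-B)..B, (1 + x) * (2 * u x y s * pdt u x y s))
      (intervalIntegral.continuous_parametric_intervalIntegral_of_continuous' c0 _ _)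
      (intervalIntegral.continuous_parametric_intervalIntegral_of_continuous' c1 _ _)
      (fun s x => ?_) 0 L t
    refine hasDerivAt_param
      (f := fun s y => (1 + x) * (u x y s) ^ 2)
      (f' := fun s y => (1 + x) * (2 * u x y s * pdt u x y s))
      (c0.comp (f := fun q : ℝ × ℝ => ((q.1, x), q.2)) (by fun_prop))
      (c1.comp (f := fun q : ℝ × ℝ => ((q.1, x), q.2)) (by fun_prop))
      (fun s y => ?_) (-B) B s
    exact (((hs.ht x y s).pow 2).const_mul (1 + x)).congr_deriv (by push_cast; ring)
  -- `u` vanishes on the open edges `x = 0` and `x = L`, hence so does its tangential derivative.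
  have tang : ∀ x0, (∀ y ∈ Ioo (-B) B, u x0 y t = 0) → ∀ y ∈ Ioo (-B) B, pdy u x0 y t = 0 := by
    intro x0 h y hy
    have hev : (fun y' => u x0 y' t) =ᶠ[nhds y] fun _ => 0 :=
      Filter.eventually_of_mem (isOpen_Ioo.mem_nhds hy) h
    exact hev.deriv_eq.trans (deriv_const y (0 : ℝ))
  rw [hderiv.deriv]
  exact weighted_ineq L B ε hL hB hε.1
    (fun x y => u x y t) (fun x y => pdt u x y t)
    (fun x y => pdx u x y t) (fun x y => pdx (pdx u) x y t)
    (fun x y => pdx (pdx (pdx u)) x y t) (fun x y => pdx (pdx (pdx (pdx u))) x y t)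
    (fun x y => pdy u x y t) (fun x y => pdy (pdy u) x y t)
    (fun x y => pdy (pdy (pdy u)) x y t) (fun x y => pdy (pdy (pdy (pdy u))) x y t)
    (fun x y => pdy (pdx u) x y t) (fun x y => pdy (pdy (pdx u)) x y t)
    (hs.slice t) (hs.dt.slice t) (hs.dx.slice t) (hs.dx.dx.slice t)
    (hs.dx.dx.dx.slice t) (hs.dx.dx.dx.dx.slice t)
    (hs.dy.slice t) (hs.dy.dy.slice t) (hs.dy.dy.dy.slice t) (hs.dy.dy.dy.dy.slice t)
    (hs.dx.dy.slice t) (hs.dx.dy.dy.slice t)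
    (fun x y => hs.hx x y t) (fun x y => hs.dx.hx x y t)
    (fun x y => hs.dx.dx.hx x y t) (fun x y => hs.dx.dx.dx.hx x y t)
    (fun x y => hs.hy x y t) (fun x y => hs.dy.hy x y t)
    (fun x y => hs.dy.dy.hy x y t) (fun x y => hs.dy.dy.dy.hy x y t)
    (fun x y => hs.pdx_pdy ▸ hs.dy.hx x y t) (fun x y => hs.dx.dy.hy x y t)
    (fun x hx y hy => heq x hx y hy t ht)
    (fun x hx => hbcY x hx t htI)
    (fun y hy => by
      obtain ⟨h1, h2, h3, h4⟩ := hbcX y hy t htI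
      exact ⟨h1, h2, h3, h4, tang 0 (fun y hy => (hbcX y hy t htI).1) y hy,
        tang L (fun y hy => (hbcX y hy t htI).2.1) y hy⟩)
end

section
/- Let δ ∈ (0,1), L, B > 0 and Ω = (0,L) × (−B,B). There exists a constant C > 0 depending only on Ω and δ such that the following holds: for every T > 0, every ε ∈ (0,1/2), and every smooth function u on [0,L] × [−B,B] × [0,T] satisfying the regularized equation u_t + u_x + |u|^{1+δ} u_x + u_{xxx} + u_{xyy} + ε(∂_x⁴u + ∂_y⁴u) = 0 on Ω × (0,T), with boundary conditions u(x,±B,t) = ∂_y²u(x,±B,t) = 0 and u(0,y,t) = u(L,y,t) = ∂_x²u(0,y,t) = ∂_x u(L,y,t) = 0, one has for every t ∈ (0,T): (d/dt) ∫_Ω x u²(t) dx dy + (1/2) ∫_Ω |∇u(t)|² dx dy + 2 ∫_Ω u_x²(t) dx dy + 2ε ∫_Ω x (u_{xx}² + u_{yy}²)(t) dx dy ≤ ∫_Ω u²(t) dx dy + 2ε ∫_{−B}^{B} u_x²(0,y,t) dy + C (∫_Ω u²(t) dx dy)^{2/(1−δ)}. -/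
open MeasureTheory Real Set

/-! ### Smooth functions of three real variables and their partial derivatives -/

/-- Joint smoothness of a curried function `u = u(x,y,t)`, the form in which the theorem
assumes it. -/
def SmoothXYT (u : ℝ → ℝ → ℝ → ℝ) : Prop :=
  ContDiff ℝ (⊤ : ℕ∞) (fun p : ℝ × ℝ × ℝ => u p.1 p.2.1 p.2.2)

namespace SmoothXYT

variable {u : ℝ → ℝ → ℝ → ℝ}

theorem hasFDerivAt (hu : SmoothXYT u) (p : ℝ × ℝ × ℝ) :
    HasFDerivAt (fun p : ℝ × ℝ × ℝ => u p.1 p.2.1 p.2.2)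
      (fderiv ℝ (fun p : ℝ × ℝ × ℝ => u p.1 p.2.1 p.2.2) p) p :=
  (hu.differentiable (by simp)).differentiableAt.hasFDerivAt

theorem hasDerivAt_x_fderiv (hu : SmoothXYT u) (x y t : ℝ) :
    HasDerivAt (fun x' => u x' y t)
      (fderiv ℝ (fun p : ℝ × ℝ × ℝ => u p.1 p.2.1 p.2.2) (x, y, t) (1, 0, 0)) x :=
  (hu.hasFDerivAt (x, y, t)).comp_hasDerivAt (f := fun x' : ℝ => (x', y, t)) x
    ((hasDerivAt_id x).prodMk ((hasDerivAt_const x y).prodMk (hasDerivAt_const x t)))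

theorem hasDerivAt_y_fderiv (hu : SmoothXYT u) (x y t : ℝ) :
    HasDerivAt (fun y' => u x y' t)
      (fderiv ℝ (fun p : ℝ × ℝ × ℝ => u p.1 p.2.1 p.2.2) (x, y, t) (0, 1, 0)) y :=
  (hu.hasFDerivAt (x, y, t)).comp_hasDerivAt (f := fun y' : ℝ => (x, y', t)) y
    ((hasDerivAt_const y x).prodMk ((hasDerivAt_id y).prodMk (hasDerivAt_const y t)))

theorem hasDerivAt_t_fderiv (hu : SmoothXYT u) (x y t : ℝ) :
    HasDerivAt (fun t' => u x y t')
      (fderiv ℝ (fun p : ℝ × ℝ × ℝ => u p.1 p.2.1 p.2.2) (x, y, t) (0, 0, 1)) t :=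
  (hu.hasFDerivAt (x, y, t)).comp_hasDerivAt (f := fun t' : ℝ => (x, y, t')) t
    ((hasDerivAt_const t x).prodMk ((hasDerivAt_const t y).prodMk (hasDerivAt_id t)))

theorem pdx_eq (hu : SmoothXYT u) (x y t : ℝ) :
    pdx u x y t = fderiv ℝ (fun p : ℝ × ℝ × ℝ => u p.1 p.2.1 p.2.2) (x, y, t) (1, 0, 0) :=
  (hu.hasDerivAt_x_fderiv x y t).deriv

theorem pdy_eq (hu : SmoothXYT u) (x y t : ℝ) :
    pdy u x y t = fderiv ℝ (fun p : ℝ × ℝ × ℝ => u p.1 p.2.1 p.2.2) (x, y, t) (0, 1, 0) :=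
  (hu.hasDerivAt_y_fderiv x y t).deriv

theorem pdt_eq (hu : SmoothXYT u) (x y t : ℝ) :
    pdt u x y t = fderiv ℝ (fun p : ℝ × ℝ × ℝ => u p.1 p.2.1 p.2.2) (x, y, t) (0, 0, 1) :=
  (hu.hasDerivAt_t_fderiv x y t).deriv

theorem hasDerivAt_x (hu : SmoothXYT u) (x y t : ℝ) :
    HasDerivAt (fun x' => u x' y t) (pdx u x y t) x := by
  rw [hu.pdx_eq]; exact hu.hasDerivAt_x_fderiv x y t

theorem hasDerivAt_y (hu : SmoothXYT u) (x y t : ℝ) :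
    HasDerivAt (fun y' => u x y' t) (pdy u x y t) y := by
  rw [hu.pdy_eq]; exact hu.hasDerivAt_y_fderiv x y t

theorem hasDerivAt_t (hu : SmoothXYT u) (x y t : ℝ) :
    HasDerivAt (fun t' => u x y t') (pdt u x y t) t := by
  rw [hu.pdt_eq]; exact hu.hasDerivAt_t_fderiv x y t

theorem fderiv_apply (hu : SmoothXYT u) (v : ℝ × ℝ × ℝ) :
    ContDiff ℝ (⊤ : ℕ∞)
      (fun p => fderiv ℝ (fun p : ℝ × ℝ × ℝ => u p.1 p.2.1 p.2.2) p v) :=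
  (ContDiff.fderiv_right (m := (⊤ : ℕ∞)) hu (by simp)).clm_apply contDiff_const

theorem pdx (hu : SmoothXYT u) : SmoothXYT (_root_.pdx u) := by
  unfold SmoothXYT
  simp_rw [hu.pdx_eq]
  exact hu.fderiv_apply _

theorem pdy (hu : SmoothXYT u) : SmoothXYT (_root_.pdy u) := by
  unfold SmoothXYT
  simp_rw [hu.pdy_eq]
  exact hu.fderiv_apply _

theorem pdt (hu : SmoothXYT u) : SmoothXYT (_root_.pdt u) := by
  unfold SmoothXYT
  simp_rw [hu.pdt_eq]
  exact hu.fderiv_apply _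

theorem fderiv_fderiv (hu : SmoothXYT u) (p v w : ℝ × ℝ × ℝ) :
    fderiv ℝ (fun q => fderiv ℝ (fun p : ℝ × ℝ × ℝ => u p.1 p.2.1 p.2.2) q v) p w =
      fderiv ℝ (fderiv ℝ (fun p : ℝ × ℝ × ℝ => u p.1 p.2.1 p.2.2)) p w v := by
  have h : DifferentiableAt ℝ (fderiv ℝ (fun p : ℝ × ℝ × ℝ => u p.1 p.2.1 p.2.2)) p :=
    ((ContDiff.fderiv_right (m := (⊤ : ℕ∞)) hu (by simp)).differentiable
      (by simp)).differentiableAt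
  rw [fderiv_clm_apply h (differentiableAt_const v)]
  simp

theorem pdx_pdy (hu : SmoothXYT u) (x y t : ℝ) :
    _root_.pdx (_root_.pdy u) x y t = _root_.pdy (_root_.pdx u) x y t := by
  rw [hu.pdy.pdx_eq, hu.pdx.pdy_eq]
  simp_rw [hu.pdx_eq, hu.pdy_eq]
  rw [hu.fderiv_fderiv, hu.fderiv_fderiv]
  exact (ContDiff.contDiffAt hu).isSymmSndFDerivAt
    (by simpa using WithTop.coe_le_coe.2 (le_top : (2 : ℕ∞) ≤ ⊤)) _ _

theorem continuous_comp {X : Type*} [TopologicalSpace X] (hu : SmoothXYT u) {f g h : X → ℝ}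
    (hf : Continuous f) (hg : Continuous g) (hh : Continuous h) :
    Continuous (fun a => u (f a) (g a) (h a)) :=
  (ContDiff.continuous hu).comp (hf.prodMk (hg.prodMk hh))

end SmoothXYT

/-! ### Iterated integrals over a rectangle -/

/-- The iterated integral `∫_a^b ∫_c^d f(x,y) dy dx`. -/
noncomputable def rectInt (a b c d : ℝ) (f : ℝ → ℝ → ℝ) : ℝ :=
  ∫ x in a..b, ∫ y in c..d, f x y

section RectInt

variable {a b c d : ℝ} {f g : ℝ → ℝ → ℝ}

theorem continuous_integral_right (hf : Continuous (Function.uncurry f)) :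
    Continuous (fun x => ∫ y in c..d, f x y) :=
  intervalIntegral.continuous_parametric_intervalIntegral_of_continuous' hf c d

theorem continuous_slice_right (hf : Continuous (Function.uncurry f)) (x : ℝ) :
    Continuous (fun y => f x y) :=
  hf.comp (Continuous.prodMk_right x)

theorem continuous_uncurry_add (hf : Continuous (Function.uncurry f))
    (hg : Continuous (Function.uncurry g)) :
    Continuous (Function.uncurry fun x y => f x y + g x y) :=
  hf.add hg

theorem rectInt_add (hf : Continuous (Function.uncurry f)) (hg : Continuous (Function.uncurry g)) :
    rectInt a b c d (fun x y => f x y + g x y) = rectInt a b c d f + rectInt a b c d g := by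
  unfold rectInt
  rw [← intervalIntegral.integral_add ((continuous_integral_right hf).intervalIntegrable _ _)
    ((continuous_integral_right hg).intervalIntegrable _ _)]
  congr 1
  ext x
  exact intervalIntegral.integral_add ((continuous_slice_right hf x).intervalIntegrable _ _)
    ((continuous_slice_right hg x).intervalIntegrable _ _)

theorem rectInt_const_mul (k : ℝ) :
    rectInt a b c d (fun x y => k * f x y) = k * rectInt a b c d f := by
  unfold rectInt
  simp_rw [intervalIntegral.integral_const_mul]

theorem rectInt_mono (hab : a ≤ b) (hcd : c ≤ d) (hf : Continuous (Function.uncurry f))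
    (hg : Continuous (Function.uncurry g))
    (h : ∀ x ∈ Set.Ioo a b, ∀ y ∈ Set.Ioo c d, f x y ≤ g x y) :
    rectInt a b c d f ≤ rectInt a b c d g :=
  intervalIntegral.integral_mono_on_of_le_Ioo hab
    ((continuous_integral_right hf).intervalIntegrable _ _)
    ((continuous_integral_right hg).intervalIntegrable _ _) fun x hx =>
    intervalIntegral.integral_mono_on_of_le_Ioo hcd
      ((continuous_slice_right hf x).intervalIntegrable _ _)
      ((continuous_slice_right hg x).intervalIntegrable _ _) (h x hx)

theorem rectInt_congr (hab : a ≤ b) (hcd : c ≤ d) (hf : Continuous (Function.uncurry f))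
    (hg : Continuous (Function.uncurry g))
    (h : ∀ x ∈ Set.Ioo a b, ∀ y ∈ Set.Ioo c d, f x y = g x y) :
    rectInt a b c d f = rectInt a b c d g :=
  le_antisymm (rectInt_mono hab hcd hf hg fun x hx y hy => (h x hx y hy).le)
    (rectInt_mono hab hcd hg hf fun x hx y hy => (h x hx y hy).ge)

theorem rectInt_nonneg (hab : a ≤ b) (hcd : c ≤ d) (h : ∀ x ∈ Set.Icc a b, ∀ y, 0 ≤ f x y) :
    0 ≤ rectInt a b c d f :=
  intervalIntegral.integral_nonneg hab fun x hx =>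
    intervalIntegral.integral_nonneg hcd fun y _ => h x hx y

/-- Fubini's theorem for continuous integrands. -/
theorem rectInt_swap (hf : Continuous (Function.uncurry f)) :
    rectInt a b c d f = ∫ y in c..d, ∫ x in a..b, f x y := by
  unfold rectInt
  exact intervalIntegral_intervalIntegral_swap
    ((hf.continuousOn.integrableOn_compact (isCompact_uIcc.prod isCompact_uIcc)).mono_set
      (Set.prod_mono Set.uIoc_subset_uIcc Set.uIoc_subset_uIcc))

/-- Integral of an `x`-derivative: only the difference of the values on the two vertical sides
remains, and it has to be known on the open sides only. -/
theorem rectInt_deriv_x {P P' : ℝ → ℝ → ℝ} {k : ℝ → ℝ} (hcd : c ≤ d)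
    (hP' : Continuous (Function.uncurry P')) (hk : Continuous k)
    (hd : ∀ x y, HasDerivAt (fun x' => P x' y) (P' x y) x)
    (h : ∀ y ∈ Set.Ioo c d, P b y - P a y = k y) :
    rectInt a b c d P' = ∫ y in c..d, k y := by
  have hsw : Continuous (Function.uncurry fun y x => P' x y) := hP'.comp continuous_swap
  have key : ∀ y ∈ Set.Ioo c d, ∫ x in a..b, P' x y = k y := fun y hy => by
    rw [← h y hy]
    exact intervalIntegral.integral_eq_sub_of_hasDerivAt (fun x _ => hd x y)
      ((continuous_slice_right hsw y).intervalIntegrable _ _)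
  rw [rectInt_swap hP']
  have h1 := (continuous_integral_right (c := a) (d := b) hsw).intervalIntegrable (μ := volume) c d
  have h2 := hk.intervalIntegrable (μ := volume) c d
  exact le_antisymm
    (intervalIntegral.integral_mono_on_of_le_Ioo hcd h1 h2 fun y hy => (key y hy).le)
    (intervalIntegral.integral_mono_on_of_le_Ioo hcd h2 h1 fun y hy => (key y hy).ge)

theorem rectInt_deriv_y {Q Q' : ℝ → ℝ → ℝ} (hab : a ≤ b)
    (hQ' : Continuous (Function.uncurry Q'))
    (hd : ∀ x y, HasDerivAt (fun y' => Q x y') (Q' x y) y)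
    (h : ∀ x ∈ Set.Ioo a b, Q x d - Q x c = 0) :
    rectInt a b c d Q' = 0 := by
  have key : ∀ x ∈ Set.Ioo a b, ∫ y in c..d, Q' x y = 0 := fun x hx => by
    rw [← h x hx]
    exact intervalIntegral.integral_eq_sub_of_hasDerivAt (fun y _ => hd x y)
      ((continuous_slice_right hQ' x).intervalIntegrable _ _)
  have h1 := (continuous_integral_right (c := c) (d := d) hQ').intervalIntegrable
    (μ := volume) a b
  have h2 := (continuous_const (y := (0 : ℝ))).intervalIntegrable (μ := volume) a b
  rw [← intervalIntegral.integral_zero (a := a) (b := b) (μ := volume) (E := ℝ)]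
  exact le_antisymm
    (intervalIntegral.integral_mono_on_of_le_Ioo hab h1 h2 fun x hx => (key x hx).le)
    (intervalIntegral.integral_mono_on_of_le_Ioo hab h2 h1 fun x hx => (key x hx).ge)

end RectInt

/-- Differentiation under the integral sign for a jointly continuous derivative. -/
theorem hasDerivAt_intervalIntegral_param {F F' : ℝ → ℝ → ℝ} {a b : ℝ}
    (hF : ∀ s, Continuous (F s)) (hF' : Continuous (Function.uncurry F'))
    (hd : ∀ s y, HasDerivAt (fun s' => F s' y) (F' s y) s) (t : ℝ) :
    HasDerivAt (fun s => ∫ y in a..b, F s y) (∫ y in a..b, F' t y) t := by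
  -- `F'` is bounded by a constant on the compact set `[t - 1, t + 1] × [[a, b]]`
  obtain ⟨M, hM⟩ := ((isCompact_closedBall t 1).prod
    (isCompact_uIcc (a := a) (b := b))).exists_bound_of_continuousOn hF'.continuousOn
  refine (intervalIntegral.hasDerivAt_integral_of_dominated_loc_of_deriv_le
    (bound := fun _ => M) (Metric.closedBall_mem_nhds t one_pos)
    (Filter.Eventually.of_forall fun s => (hF s).aestronglyMeasurable)
    ((hF t).intervalIntegrable _ _) (continuous_slice_right hF' t).aestronglyMeasurable
    (Filter.Eventually.of_forall fun y hy s hs => hM (s, y) ⟨hs, Set.uIoc_subset_uIcc hy⟩)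
    (continuous_const.intervalIntegrable _ _)
    (Filter.Eventually.of_forall fun y _ s _ => hd s y)).2

/-! ### A Ladyzhenskaya inequality and the bound of the nonlinear term -/

/-- One-dimensional trace bound: `w² = ∫ 2 w w'` for a function vanishing at the left end, and
`2 w w' ≤ μ w² + μ⁻¹ w'²`. The free parameter `μ` replaces the Cauchy–Schwarz inequality. -/
theorem sq_le_integral_of_left_zero {w w' : ℝ → ℝ} {a b x μ : ℝ} (hμ : 0 < μ)
    (hw' : Continuous w') (hd : ∀ s, HasDerivAt w (w' s) s) (h0 : w a = 0)
    (hx : x ∈ Set.Icc a b) :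
    w x ^ 2 ≤ ∫ s in a..b, (μ * w s ^ 2 + μ⁻¹ * w' s ^ 2) := by
  have hw : Continuous w := continuous_iff_continuousAt.2 fun s => (hd s).continuousAt
  have hc : Continuous fun s => μ * w s ^ 2 + μ⁻¹ * w' s ^ 2 := by fun_prop
  have hc2 : Continuous fun s => 2 * w s * w' s := by fun_prop
  have h1 : ∫ s in a..x, 2 * w s * w' s = w x ^ 2 := by
    rw [intervalIntegral.integral_eq_sub_of_hasDerivAt (f := fun s => w s ^ 2)
      (fun s _ => by simpa using (hd s).fun_pow 2) (hc2.intervalIntegrable _ _)]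
    simp [h0]
  rw [← h1]
  calc ∫ s in a..x, 2 * w s * w' s
      ≤ ∫ s in a..x, (μ * w s ^ 2 + μ⁻¹ * w' s ^ 2) := by
        refine intervalIntegral.integral_mono_on hx.1 (hc2.intervalIntegrable _ _)
          (hc.intervalIntegrable _ _) fun s _ => ?_
        have h : μ * w s ^ 2 + μ⁻¹ * w' s ^ 2 - 2 * w s * w' s
            = μ⁻¹ * (μ * w s - w' s) ^ 2 := by field_simp; ring
        have : 0 ≤ μ⁻¹ * (μ * w s - w' s) ^ 2 := by positivity
        linarith
    _ ≤ _ := intervalIntegral.integral_mono_interval le_rfl hx.1 hx.2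
        (Filter.Eventually.of_forall fun s => by positivity) (hc.intervalIntegrable _ _)

/-- Optimization over the parameter `μ`. The perturbation by `η` avoids separating the cases
`A = 0` and `G = 0`, where the optimal `μ` degenerates. -/
theorem le_four_mul_of_forall_param {X A G : ℝ} (hA : 0 ≤ A) (hG : 0 ≤ G)
    (h : ∀ μ : ℝ, 0 < μ → X ≤ (μ * A + μ⁻¹ * G) ^ 2) : X ≤ 4 * A * G := by
  have key : ∀ η : ℝ, 0 < η → X ≤ 4 * (A + η) * (G + η) := fun η hη => by
    have ha : 0 < A + η := by linarith
    have hg : 0 < G + η := by linarith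
    set p := √(A + η) with hp
    set q := √(G + η) with hq
    have hp0 : 0 < p := Real.sqrt_pos.2 ha
    have hq0 : 0 < q := Real.sqrt_pos.2 hg
    have hpp : p ^ 2 = A + η := Real.sq_sqrt ha.le
    have hqq : q ^ 2 = G + η := Real.sq_sqrt hg.le
    have hμ : 0 < q / p := by positivity
    calc X ≤ (q / p * A + (q / p)⁻¹ * G) ^ 2 := h _ hμ
      _ ≤ (q / p * (A + η) + (q / p)⁻¹ * (G + η)) ^ 2 := by
        gcongr <;> linarith
      _ = 4 * (A + η) * (G + η) := by
        rw [← hpp, ← hqq]; field_simp; ring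
  have hlim : Filter.Tendsto (fun η : ℝ => 4 * (A + η) * (G + η)) (nhdsWithin 0 (Set.Ioi 0))
      (nhds (4 * (A + 0) * (G + 0))) :=
    Filter.Tendsto.mono_left (Continuous.tendsto (by fun_prop) 0) nhdsWithin_le_nhds
  simpa using ge_of_tendsto hlim (Filter.eventually_of_mem self_mem_nhdsWithin key)

section Ladyzhenskaya

variable {a b c d : ℝ} {v vx vy : ℝ → ℝ → ℝ}

/-- Ladyzhenskaya's inequality `∫ v⁴ ≤ 4 ∫ v² ∫ |∇v|²`, with a constant independent of the
rectangle; it suffices that `v` vanishes on the left and on the bottom side. -/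
theorem rectInt_pow_four_le (hab : a ≤ b) (hcd : c ≤ d)
    (hv : Continuous (Function.uncurry v)) (hvx : Continuous (Function.uncurry vx))
    (hvy : Continuous (Function.uncurry vy))
    (hdx : ∀ x y, HasDerivAt (fun x' => v x' y) (vx x y) x)
    (hdy : ∀ x y, HasDerivAt (fun y' => v x y') (vy x y) y)
    (hleft : ∀ y ∈ Set.Ioo c d, v a y = 0) (hbot : ∀ x ∈ Set.Ioo a b, v x c = 0) :
    rectInt a b c d (fun x y => v x y ^ 4)
      ≤ 4 * rectInt a b c d (fun x y => v x y ^ 2)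
        * rectInt a b c d (fun x y => vx x y ^ 2 + vy x y ^ 2) := by
  have hv' : Continuous fun p : ℝ × ℝ => v p.1 p.2 := hv
  have hvx' : Continuous fun p : ℝ × ℝ => vx p.1 p.2 := hvx
  have hvy' : Continuous fun p : ℝ × ℝ => vy p.1 p.2 := hvy
  have hcv2 : Continuous (Function.uncurry fun x y => v x y ^ 2) := hv'.pow 2
  have hcg : Continuous (Function.uncurry fun x y => vx x y ^ 2 + vy x y ^ 2) :=
    (hvx'.pow 2).add (hvy'.pow 2)
  refine le_four_mul_of_forall_param
    (rectInt_nonneg hab hcd fun x _ y => by positivity)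
    (rectInt_nonneg hab hcd fun x _ y => by positivity) fun μ hμ => ?_
  have hμ' : 0 < μ⁻¹ := inv_pos.2 hμ
  set A := rectInt a b c d (fun x y => v x y ^ 2)
  set G := rectInt a b c d (fun x y => vx x y ^ 2 + vy x y ^ 2)
  have hcX : Continuous (Function.uncurry fun x y => μ * v x y ^ 2 + μ⁻¹ * vx x y ^ 2) :=
    (continuous_const.mul (hv'.pow 2)).add (continuous_const.mul (hvx'.pow 2))
  have hcY : Continuous (Function.uncurry fun x y => μ * v x y ^ 2 + μ⁻¹ * vy x y ^ 2) :=
    (continuous_const.mul (hv'.pow 2)).add (continuous_const.mul (hvy'.pow 2))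
  have hcM : Continuous (Function.uncurry fun x y =>
      μ * v x y ^ 2 + μ⁻¹ * (vx x y ^ 2 + vy x y ^ 2)) :=
    (continuous_const.mul hcv2).add (continuous_const.mul hcg)
  have hM : rectInt a b c d (fun x y => μ * v x y ^ 2 + μ⁻¹ * (vx x y ^ 2 + vy x y ^ 2))
      = μ * A + μ⁻¹ * G := by
    have c1 : Continuous (Function.uncurry fun x y => μ * v x y ^ 2) := continuous_const.mul hcv2
    have c2 : Continuous (Function.uncurry fun x y => μ⁻¹ * (vx x y ^ 2 + vy x y ^ 2)) :=
      continuous_const.mul hcg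
    rw [rectInt_add c1 c2, rectInt_const_mul, rectInt_const_mul]
  -- `v²` is bounded by `f y` (integration along `x`) and by `g x` (integration along `y`)
  set f : ℝ → ℝ := fun y => ∫ x in a..b, (μ * v x y ^ 2 + μ⁻¹ * vx x y ^ 2) with hf
  set g : ℝ → ℝ := fun x => ∫ y in c..d, (μ * v x y ^ 2 + μ⁻¹ * vy x y ^ 2) with hg
  have hfc : Continuous f := continuous_integral_right (hcX.comp continuous_swap)
  have hgc : Continuous g := continuous_integral_right hcY
  have hIf : ∫ y in c..d, f y ≤ μ * A + μ⁻¹ * G := by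
    rw [hf, ← rectInt_swap hcX, ← hM]
    refine rectInt_mono hab hcd hcX hcM fun x _ y _ => ?_
    gcongr
    exact le_add_of_nonneg_right (sq_nonneg _)
  have hIg : ∫ x in a..b, g x ≤ μ * A + μ⁻¹ * G := by
    rw [← hM]
    refine rectInt_mono hab hcd hcY hcM fun x _ y _ => ?_
    gcongr
    exact le_add_of_nonneg_left (sq_nonneg _)
  have hf0 : 0 ≤ ∫ y in c..d, f y := intervalIntegral.integral_nonneg hcd fun y _ =>
    intervalIntegral.integral_nonneg hab fun x _ => by positivity
  have hg0 : 0 ≤ ∫ x in a..b, g x := intervalIntegral.integral_nonneg hab fun x _ =>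
    intervalIntegral.integral_nonneg hcd fun y _ => by positivity
  calc rectInt a b c d (fun x y => v x y ^ 4)
      ≤ rectInt a b c d (fun x y => g x * f y) := by
        refine rectInt_mono hab hcd (hv'.pow 4)
          ((hgc.comp continuous_fst).mul (hfc.comp continuous_snd)) fun x hx y hy => ?_
        have h1 : v x y ^ 2 ≤ f y := sq_le_integral_of_left_zero (w := fun x => v x y) hμ
          (hvx'.comp (Continuous.prodMk_left y)) (fun s => hdx s y) (hleft y hy)
          (Set.Ioo_subset_Icc_self hx)
        have h2 : v x y ^ 2 ≤ g x := sq_le_integral_of_left_zero (w := fun y => v x y) hμ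
          (hvy'.comp (Continuous.prodMk_right x)) (fun s => hdy x s) (hbot x hx)
          (Set.Ioo_subset_Icc_self hy)
        calc v x y ^ 4 = v x y ^ 2 * v x y ^ 2 := by ring
          _ ≤ g x * f y := mul_le_mul h2 h1 (sq_nonneg _) ((sq_nonneg _).trans h2)
    _ = (∫ x in a..b, g x) * ∫ y in c..d, f y := by
        simp only [rectInt, intervalIntegral.integral_const_mul,
          intervalIntegral.integral_mul_const]
    _ ≤ (μ * A + μ⁻¹ * G) ^ 2 := by
        rw [sq]; exact mul_le_mul hIg hIf hf0 (hg0.trans hIg)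

/-- Young's inequality interpolating the power `3 + δ` between `2` and `4`. -/
theorem abs_rpow_le_young {δ r : ℝ} (hδ : δ ∈ Set.Ioo (0 : ℝ) 1) (hr : 0 < r) (z : ℝ) :
    |z| ^ (3 + δ) ≤ r⁻¹ * z ^ 4 + r ^ ((1 + δ) / (1 - δ)) * z ^ 2 := by
  obtain ⟨h0, h1⟩ := hδ
  have h1' : 0 < 1 - δ := by linarith
  have hs : 0 ≤ z ^ 2 := sq_nonneg z
  have hsplit : |z| ^ (3 + δ) = z ^ 2 * (z ^ 2) ^ ((1 + δ) / 2) := by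
    rw [← sq_abs z, ← Real.rpow_natCast, ← Real.rpow_mul (abs_nonneg z),
      ← Real.rpow_add_of_nonneg (abs_nonneg z) (by norm_num) (by push_cast; positivity)]
    congr 1
    push_cast
    ring
  have hk : 0 ≤ r ^ ((1 + δ) / (1 - δ)) := (Real.rpow_pos_of_pos hr _).le
  have hy := Real.geom_mean_le_arith_mean2_weighted (w₁ := (1 + δ) / 2) (w₂ := (1 - δ) / 2)
    (p₁ := r⁻¹ * z ^ 2) (p₂ := r ^ ((1 + δ) / (1 - δ))) (by linarith) (by linarith)
    (by positivity) hk (by ring)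
  have hprod : (r⁻¹ * z ^ 2) ^ ((1 + δ) / 2) * (r ^ ((1 + δ) / (1 - δ))) ^ ((1 - δ) / 2)
      = (z ^ 2) ^ ((1 + δ) / 2) := by
    rw [Real.mul_rpow (by positivity) hs, ← Real.rpow_mul hr.le,
      show (1 + δ) / (1 - δ) * ((1 - δ) / 2) = (1 + δ) / 2 by field_simp,
      Real.inv_rpow hr.le]
    have : r ^ ((1 + δ) / 2) ≠ 0 := (Real.rpow_pos_of_pos hr _).ne'
    field_simp
  rw [hprod] at hy
  have hz : 0 ≤ r⁻¹ * z ^ 2 := by positivity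
  have hy' : (z ^ 2) ^ ((1 + δ) / 2) ≤ r⁻¹ * z ^ 2 + r ^ ((1 + δ) / (1 - δ)) :=
    hy.trans (add_le_add (mul_le_of_le_one_left hz (by linarith))
      (mul_le_of_le_one_left hk (by linarith)))
  rw [hsplit]
  calc z ^ 2 * (z ^ 2) ^ ((1 + δ) / 2)
      ≤ z ^ 2 * (r⁻¹ * z ^ 2 + r ^ ((1 + δ) / (1 - δ))) := by gcongr
    _ = _ := by ring

/-- The subcritical bound of the nonlinear term: the gradient is absorbed with coefficient `1/2`,
at the price of a power of the mass. -/
theorem rectInt_abs_rpow_le {δ : ℝ} (hδ : δ ∈ Set.Ioo (0 : ℝ) 1) (hab : a ≤ b) (hcd : c ≤ d)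
    (hv : Continuous (Function.uncurry v)) (hvx : Continuous (Function.uncurry vx))
    (hvy : Continuous (Function.uncurry vy))
    (hdx : ∀ x y, HasDerivAt (fun x' => v x' y) (vx x y) x)
    (hdy : ∀ x y, HasDerivAt (fun y' => v x y') (vy x y) y)
    (hleft : ∀ y ∈ Set.Ioo c d, v a y = 0) (hbot : ∀ x ∈ Set.Ioo a b, v x c = 0) :
    rectInt a b c d (fun x y => |v x y| ^ (3 + δ))
      ≤ 1 / 2 * rectInt a b c d (fun x y => vx x y ^ 2 + vy x y ^ 2)
        + 8 ^ ((1 + δ) / (1 - δ))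
          * rectInt a b c d (fun x y => v x y ^ 2) ^ (2 / (1 - δ)) := by
  have hL := rectInt_pow_four_le hab hcd hv hvx hvy hdx hdy hleft hbot
  have hG : 0 ≤ rectInt a b c d (fun x y => vx x y ^ 2 + vy x y ^ 2) :=
    rectInt_nonneg hab hcd fun x _ y => by positivity
  have hA : 0 ≤ rectInt a b c d (fun x y => v x y ^ 2) :=
    rectInt_nonneg hab hcd fun x _ y => by positivity
  have hv' : Continuous fun p : ℝ × ℝ => v p.1 p.2 := hv
  have hY : ∀ r : ℝ, 0 < r → rectInt a b c d (fun x y => |v x y| ^ (3 + δ))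
      ≤ r⁻¹ * rectInt a b c d (fun x y => v x y ^ 4)
        + r ^ ((1 + δ) / (1 - δ)) * rectInt a b c d (fun x y => v x y ^ 2) := fun r hr => by
    have c4 : Continuous (Function.uncurry fun x y => r⁻¹ * v x y ^ 4) :=
      continuous_const.mul (hv'.pow 4)
    have c2 : Continuous
        (Function.uncurry fun x y => r ^ ((1 + δ) / (1 - δ)) * v x y ^ 2) :=
      continuous_const.mul (hv'.pow 2)
    rw [← rectInt_const_mul, ← rectInt_const_mul, ← rectInt_add c4 c2]
    exact rectInt_mono hab hcd
      (hv'.abs.rpow_const fun _ => Or.inr (by linarith [hδ.1])) (c4.add c2)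
      fun x _ y _ => abs_rpow_le_young hδ hr _
  generalize rectInt a b c d (fun x y => v x y ^ 2) = A at *
  generalize rectInt a b c d (fun x y => vx x y ^ 2 + vy x y ^ 2) = G at *
  generalize rectInt a b c d (fun x y => v x y ^ 4) = X at *
  have h1 : 0 < 1 - δ := by linarith [hδ.2]
  rcases hA.eq_or_lt with rfl | hA
  · have h := hY 1 one_pos
    have : 0 ≤ (8 : ℝ) ^ ((1 + δ) / (1 - δ)) * 0 ^ (2 / (1 - δ)) := by positivity
    simp only [inv_one, one_mul, mul_zero, add_zero, zero_mul] at h hL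
    linarith
  · have h := hY (8 * A) (by positivity)
    -- `r = 8 A` turns `r⁻¹ · 4 A G` into `G / 2`
    have e1 : (8 * A)⁻¹ * X ≤ 1 / 2 * G := by
      calc (8 * A)⁻¹ * X ≤ (8 * A)⁻¹ * (4 * A * G) := by gcongr
        _ = 1 / 2 * G := by field_simp; ring
    have e2 : (8 * A) ^ ((1 + δ) / (1 - δ)) * A
        = 8 ^ ((1 + δ) / (1 - δ)) * A ^ (2 / (1 - δ)) := by
      rw [Real.mul_rpow (by norm_num) hA.le, mul_assoc]
      congr 1
      nth_rewrite 2 [← Real.rpow_one A]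
      rw [← Real.rpow_add hA]
      congr 1
      field_simp
      ring
    linarith

end Ladyzhenskaya

/-! ### The weighted energy identity -/

section Energy

variable {L B ε δ : ℝ} {U U₁ U₂ U₃ U₄ V₁ V₂ V₃ V₄ M₁ M₂ W : ℝ → ℝ → ℝ}

/-- The identity obtained by multiplying the equation by `2 x u` and integrating, at a fixed time.
Here `U` is the solution, `Uᵢ = ∂ₓⁱU`, `Vᵢ = ∂_yⁱU`, `Mᵢ = ∂_yⁱ∂ₓU` and `W = ∂ₜU`. All
integrations by parts are done at once: `2 x U` times the equation is `2 x U W + ∂ₓP + ∂_yQ` plus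
quadratic terms and a power of `|U|`, with the fluxes `P`, `Q` written out in the proof. -/
theorem weighted_energy_identity (hδ : 0 < δ) (hL : 0 < L) (hB : 0 < B)
    (cU : Continuous fun p : ℝ × ℝ => U p.1 p.2) (cU₁ : Continuous fun p : ℝ × ℝ => U₁ p.1 p.2)
    (cU₂ : Continuous fun p : ℝ × ℝ => U₂ p.1 p.2) (cU₃ : Continuous fun p : ℝ × ℝ => U₃ p.1 p.2)
    (cU₄ : Continuous fun p : ℝ × ℝ => U₄ p.1 p.2) (cV₁ : Continuous fun p : ℝ × ℝ => V₁ p.1 p.2)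
    (cV₂ : Continuous fun p : ℝ × ℝ => V₂ p.1 p.2)
    (cV₄ : Continuous fun p : ℝ × ℝ => V₄ p.1 p.2) (cM₁ : Continuous fun p : ℝ × ℝ => M₁ p.1 p.2)
    (cM₂ : Continuous fun p : ℝ × ℝ => M₂ p.1 p.2) (cW : Continuous fun p : ℝ × ℝ => W p.1 p.2)
    (dU : ∀ x y, HasDerivAt (fun x => U x y) (U₁ x y) x)
    (dU₁ : ∀ x y, HasDerivAt (fun x => U₁ x y) (U₂ x y) x)
    (dU₂ : ∀ x y, HasDerivAt (fun x => U₂ x y) (U₃ x y) x)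
    (dU₃ : ∀ x y, HasDerivAt (fun x => U₃ x y) (U₄ x y) x)
    (dV₁ : ∀ x y, HasDerivAt (fun x => V₁ x y) (M₁ x y) x)
    (eU : ∀ x y, HasDerivAt (fun y => U x y) (V₁ x y) y)
    (eV₁ : ∀ x y, HasDerivAt (fun y => V₁ x y) (V₂ x y) y)
    (eV₂ : ∀ x y, HasDerivAt (fun y => V₂ x y) (V₃ x y) y)
    (eV₃ : ∀ x y, HasDerivAt (fun y => V₃ x y) (V₄ x y) y)
    (eM₁ : ∀ x y, HasDerivAt (fun y => M₁ x y) (M₂ x y) y)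
    (hpde : ∀ x ∈ Set.Ioo 0 L, ∀ y ∈ Set.Ioo (-B) B,
      W x y + U₁ x y + |U x y| ^ (1 + δ) * U₁ x y + U₃ x y + M₂ x y
        + ε * (U₄ x y + V₄ x y) = 0)
    (hbot : ∀ x ∈ Set.Ioo 0 L, U x (-B) = 0) (htop : ∀ x ∈ Set.Ioo 0 L, U x B = 0)
    (hbot₂ : ∀ x ∈ Set.Ioo 0 L, V₂ x (-B) = 0) (htop₂ : ∀ x ∈ Set.Ioo 0 L, V₂ x B = 0)
    (hleft : ∀ y ∈ Set.Ioo (-B) B, U 0 y = 0) (hright : ∀ y ∈ Set.Ioo (-B) B, U L y = 0)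
    (hright₁ : ∀ y ∈ Set.Ioo (-B) B, U₁ L y = 0) :
    rectInt 0 L (-B) B (fun x y => x * (2 * U x y * W x y))
        + 3 * rectInt 0 L (-B) B (fun x y => U₁ x y ^ 2)
        + rectInt 0 L (-B) B (fun x y => V₁ x y ^ 2)
        + 2 * ε * rectInt 0 L (-B) B (fun x y => x * (U₂ x y ^ 2 + V₂ x y ^ 2))
      = rectInt 0 L (-B) B (fun x y => U x y ^ 2)
        + 2 * ε * (∫ y in (-B)..B, U₁ 0 y ^ 2)
        + 2 / (3 + δ) * rectInt 0 L (-B) B (fun x y => |U x y| ^ (3 + δ)) := by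
  have hBB : -B ≤ B := by linarith
  have h3δ : (3 + δ) ≠ 0 := by linarith
  have cA : Continuous fun p : ℝ × ℝ => |U p.1 p.2| ^ (3 + δ) :=
    cU.abs.rpow_const fun _ => Or.inr (by linarith)
  have cA₁ : Continuous fun p : ℝ × ℝ => |U p.1 p.2| ^ (1 + δ) :=
    cU.abs.rpow_const fun _ => Or.inr (by linarith)
  have dA : ∀ x y, HasDerivAt (fun x => |U x y| ^ (3 + δ))
      ((3 + δ) * |U x y| ^ (1 + δ) * U x y * U₁ x y) x := fun x y => by
    have h := (hasDerivAt_abs_rpow (U x y) (p := 3 + δ) (by linarith)).comp x (dU x y)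
    rwa [show 3 + δ - 2 = 1 + δ by ring] at h
  -- on `x = L` tangential differentiation of the boundary condition gives `∂_y U = 0`
  have hright_y : ∀ y ∈ Set.Ioo (-B) B, V₁ L y = 0 := fun y hy => by
    have h0 : HasDerivAt (fun y => U L y) 0 y :=
      (hasDerivAt_const y (0 : ℝ)).congr_of_eventuallyEq
        (Filter.eventuallyEq_of_mem (isOpen_Ioo.mem_nhds hy) hright)
    exact (eU L y).unique h0
  let P : ℝ → ℝ → ℝ := fun x y =>
    x * U x y ^ 2 + 2 / (3 + δ) * (x * |U x y| ^ (3 + δ))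
      + (2 * x * U x y * U₂ x y - x * U₁ x y ^ 2 - 2 * U x y * U₁ x y) - x * V₁ x y ^ 2
      + ε * (2 * x * U x y * U₃ x y - 2 * x * U₁ x y * U₂ x y - 2 * U x y * U₂ x y
        + 2 * U₁ x y ^ 2)
  let P' : ℝ → ℝ → ℝ := fun x y =>
    U x y ^ 2 + 2 * x * U x y * U₁ x y
      + 2 / (3 + δ) * |U x y| ^ (3 + δ) + 2 * x * |U x y| ^ (1 + δ) * U x y * U₁ x y
      + (2 * x * U x y * U₃ x y - 3 * U₁ x y ^ 2)
      - (V₁ x y ^ 2 + 2 * x * V₁ x y * M₁ x y)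
      + ε * (2 * x * U x y * U₄ x y - 2 * x * U₂ x y ^ 2)
  let Q : ℝ → ℝ → ℝ := fun x y =>
    2 * x * U x y * M₁ x y + ε * (2 * x * U x y * V₃ x y - 2 * x * V₁ x y * V₂ x y)
  let Q' : ℝ → ℝ → ℝ := fun x y =>
    2 * x * V₁ x y * M₁ x y + 2 * x * U x y * M₂ x y
      + ε * (2 * x * U x y * V₄ x y - 2 * x * V₂ x y ^ 2)
  have cP' : Continuous (Function.uncurry P') := by
    simp only [Function.uncurry_def, P']; fun_prop
  have cQ' : Continuous (Function.uncurry Q') := by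
    simp only [Function.uncurry_def, Q']; fun_prop
  have dP : ∀ x y, HasDerivAt (fun x' => P x' y) (P' x y) x := fun x y => by
    have i := hasDerivAt_id' x
    have h2 := i.const_mul 2
    have h := ((((i.mul ((dU x y).fun_pow 2)).add ((i.mul (dA x y)).const_mul (2 / (3 + δ)))).add
      ((((h2.mul (dU x y)).mul (dU₂ x y)).sub (i.mul ((dU₁ x y).fun_pow 2))).sub
        (((dU x y).const_mul 2).mul (dU₁ x y)))).sub (i.mul ((dV₁ x y).fun_pow 2))).add
      ((((((h2.mul (dU x y)).mul (dU₃ x y)).sub ((h2.mul (dU₁ x y)).mul (dU₂ x y))).sub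
        (((dU x y).const_mul 2).mul (dU₂ x y))).add
          (((dU₁ x y).fun_pow 2).const_mul 2)).const_mul ε)
    refine h.congr_deriv ?_
    simp only [P', Pi.mul_apply]
    field_simp
    ring
  have dQ : ∀ x y, HasDerivAt (fun y' => Q x y') (Q' x y) y := fun x y => by
    have h2 := (eU x y).const_mul (2 * x)
    have h := (h2.mul (eM₁ x y)).add (((h2.mul (eV₃ x y)).sub
      (((eV₁ x y).const_mul (2 * x)).mul (eV₂ x y))).const_mul ε)
    refine h.congr_deriv ?_
    simp only [Q']
    ring
  have IP : rectInt 0 L (-B) B P' = ∫ y in (-B)..B, -(2 * ε) * U₁ 0 y ^ 2 := by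
    refine rectInt_deriv_x hBB cP' (by fun_prop) dP fun y hy => ?_
    have h3 : (0 : ℝ) ^ (3 + δ) = 0 := Real.zero_rpow h3δ
    simp only [P, hleft y hy, hright y hy, hright₁ y hy, hright_y y hy, abs_zero, h3]
    ring
  have IQ : rectInt 0 L (-B) B Q' = 0 := by
    refine rectInt_deriv_y hL.le cQ' dQ fun x hx => ?_
    simp only [Q, hbot x hx, htop x hx, hbot₂ x hx, htop₂ x hx]
    ring
  -- the pointwise identity, arranged as an equality of two sums of continuous functions
  have c1 : Continuous (Function.uncurry fun x y => x * (2 * U x y * W x y)) := by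
    simp only [Function.uncurry_def]; fun_prop
  have c2 : Continuous (Function.uncurry fun x y => 3 * U₁ x y ^ 2) := by
    simp only [Function.uncurry_def]; fun_prop
  have c3 : Continuous (Function.uncurry fun x y => V₁ x y ^ 2) := by
    simp only [Function.uncurry_def]; fun_prop
  have c4 : Continuous
      (Function.uncurry fun x y => 2 * ε * (x * (U₂ x y ^ 2 + V₂ x y ^ 2))) := by
    simp only [Function.uncurry_def]; fun_prop
  have c5 : Continuous (Function.uncurry fun x y => U x y ^ 2) := by
    simp only [Function.uncurry_def]; fun_prop
  have c6 : Continuous (Function.uncurry fun x y => 2 / (3 + δ) * |U x y| ^ (3 + δ)) :=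
    continuous_const.mul cA
  have hsum : rectInt 0 L (-B) B (fun x y => x * (2 * U x y * W x y) + 3 * U₁ x y ^ 2
        + V₁ x y ^ 2 + 2 * ε * (x * (U₂ x y ^ 2 + V₂ x y ^ 2)) + P' x y + Q' x y)
      = rectInt 0 L (-B) B (fun x y => U x y ^ 2 + 2 / (3 + δ) * |U x y| ^ (3 + δ)) := by
    refine rectInt_congr hL.le hBB (((((c1.add c2).add c3).add c4).add cP').add cQ')
      (c5.add c6) fun x hx y hy => ?_
    simp only [P', Q']
    linear_combination (2 * x * U x y) * hpde x hx y hy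
  have c12 := continuous_uncurry_add c1 c2
  have c13 := continuous_uncurry_add c12 c3
  have c14 := continuous_uncurry_add c13 c4
  rw [rectInt_add (continuous_uncurry_add c14 cP') cQ', rectInt_add c14 cP',
    rectInt_add c13 c4, rectInt_add c12 c3, rectInt_add c1 c2, rectInt_add c5 c6, IP, IQ,
    rectInt_const_mul, rectInt_const_mul, rectInt_const_mul,
    intervalIntegral.integral_const_mul] at hsum
  linarith

end Energy

/-- The weighted mass may be differentiated under both integral signs. -/
theorem SmoothXYT.hasDerivAt_weighted_mass {u : ℝ → ℝ → ℝ → ℝ} (hu : SmoothXYT u)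
    (a b c d t : ℝ) :
    HasDerivAt (fun s => ∫ x in a..b, ∫ y in c..d, x * (u x y s) ^ 2)
      (rectInt a b c d fun x y => x * (2 * u x y t * _root_.pdt u x y t)) t := by
  have hF' : Continuous fun q : (ℝ × ℝ) × ℝ =>
      q.1.2 * (2 * u q.1.2 q.2 q.1.1 * _root_.pdt u q.1.2 q.2 q.1.1) := by
    have h1 := hu.continuous_comp (X := (ℝ × ℝ) × ℝ) (f := fun q => q.1.2) (g := fun q => q.2)
      (h := fun q => q.1.1) (by fun_prop) (by fun_prop) (by fun_prop)
    have h2 := hu.pdt.continuous_comp (X := (ℝ × ℝ) × ℝ) (f := fun q => q.1.2)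
      (g := fun q => q.2) (h := fun q => q.1.1) (by fun_prop) (by fun_prop) (by fun_prop)
    exact (continuous_snd.comp continuous_fst).mul ((continuous_const.mul h1).mul h2)
  have hF : ∀ s, Continuous fun q : ℝ × ℝ => q.1 * u q.1 q.2 s ^ 2 := fun s =>
    continuous_fst.mul
      ((hu.continuous_comp continuous_fst continuous_snd continuous_const).pow 2)
  refine hasDerivAt_intervalIntegral_param
    (F := fun s x => ∫ y in c..d, x * (u x y s) ^ 2)
    (F' := fun s x => ∫ y in c..d, x * (2 * u x y s * _root_.pdt u x y s)) (fun s => ?_) ?_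
    (fun s x => ?_) t
  · exact continuous_integral_right (hF s)
  · exact intervalIntegral.continuous_parametric_intervalIntegral_of_continuous'
      (f := fun (p : ℝ × ℝ) y => p.2 * (2 * u p.2 y p.1 * _root_.pdt u p.2 y p.1)) hF' c d
  · refine hasDerivAt_intervalIntegral_param (F := fun s y => x * (u x y s) ^ 2)
      (F' := fun s y => x * (2 * u x y s * _root_.pdt u x y s))
      (fun s => (hF s).comp (Continuous.prodMk_right x)) ?_ (fun s y => ?_) s
    · exact hF'.comp (f := fun p : ℝ × ℝ => ((p.1, x), p.2)) (by fun_prop)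
    · simpa using ((hu.hasDerivAt_t x y s).fun_pow 2).const_mul x

/-! ### The estimate -/

/-- Subcritical weighted a priori estimate for the parabolic regularization of the
generalized Zakharov–Kuznetsov equation, `δ ∈ (0,1)`: there is `C = C(Ω,δ) > 0` such that
for all `T > 0`, `ε ∈ (0,1/2)` and smooth solutions `u`,
`(d/dt)∫ x u² + (1/2)∫|∇u|² + 2∫u_x² + 2ε∫ x(u_xx² + u_yy²)
  ≤ ∫u² + 2ε∫ u_x²(0,y,t) dy + C (∫u²)^{2/(1−δ)}`. -/
theorem gZK_subcritical_weighted_estimate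
    (δ L B : ℝ) (hδ : δ ∈ Set.Ioo (0 : ℝ) 1) (hL : 0 < L) (hB : 0 < B) :
    ∃ C : ℝ, 0 < C ∧
      ∀ T : ℝ, 0 < T → ∀ ε ∈ Set.Ioo (0 : ℝ) (1 / 2),
        ∀ u : ℝ → ℝ → ℝ → ℝ,
          ContDiff ℝ (⊤ : ℕ∞) (fun p : ℝ × ℝ × ℝ => u p.1 p.2.1 p.2.2) →
          (∀ x ∈ Set.Ioo (0 : ℝ) L, ∀ y ∈ Set.Ioo (-B) B, ∀ t ∈ Set.Ioo (0 : ℝ) T,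
            pdt u x y t + pdx u x y t + |u x y t| ^ (1 + δ) * pdx u x y t
              + pdx (pdx (pdx u)) x y t + pdy (pdy (pdx u)) x y t
              + ε * (pdx (pdx (pdx (pdx u))) x y t + pdy (pdy (pdy (pdy u))) x y t) = 0) →
          (∀ x ∈ Set.Ioo (0 : ℝ) L, ∀ t ∈ Set.Icc (0 : ℝ) T,
            u x (-B) t = 0 ∧ u x B t = 0 ∧ pdy (pdy u) x (-B) t = 0 ∧ pdy (pdy u) x B t = 0) →
          (∀ y ∈ Set.Ioo (-B) B, ∀ t ∈ Set.Icc (0 : ℝ) T,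
            u 0 y t = 0 ∧ u L y t = 0 ∧ pdx (pdx u) 0 y t = 0 ∧ pdx u L y t = 0) →
          ∀ t ∈ Set.Ioo (0 : ℝ) T,
            deriv (fun s => ∫ x in (0:ℝ)..L, ∫ y in (-B)..B, x * (u x y s) ^ 2) t
              + (1 / 2) * (∫ x in (0:ℝ)..L, ∫ y in (-B)..B,
                  ((pdx u x y t) ^ 2 + (pdy u x y t) ^ 2))
              + 2 * (∫ x in (0:ℝ)..L, ∫ y in (-B)..B, (pdx u x y t) ^ 2)
              + 2 * ε * (∫ x in (0:ℝ)..L, ∫ y in (-B)..B,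
                  x * ((pdx (pdx u) x y t) ^ 2 + (pdy (pdy u) x y t) ^ 2))
            ≤ (∫ x in (0:ℝ)..L, ∫ y in (-B)..B, (u x y t) ^ 2)
              + 2 * ε * (∫ y in (-B)..B, (pdx u 0 y t) ^ 2)
              + C * (∫ x in (0:ℝ)..L, ∫ y in (-B)..B, (u x y t) ^ 2) ^ (2 / (1 - δ)) := by
  refine ⟨8 ^ ((1 + δ) / (1 - δ)), by positivity, ?_⟩
  intro T _ ε _ u hsm hpde hy hx t ht
  have hu : SmoothXYT u := hsm
  have ht' : t ∈ Set.Icc 0 T := Set.Ioo_subset_Icc_self ht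
  have hBB : -B ≤ B := by linarith
  have cont : ∀ {w : ℝ → ℝ → ℝ → ℝ}, SmoothXYT w →
      Continuous fun p : ℝ × ℝ => w p.1 p.2 t := fun hw =>
    hw.continuous_comp continuous_fst continuous_snd continuous_const
  have energy := weighted_energy_identity (L := L) (B := B) (ε := ε) (δ := δ)
    (U := fun x y => u x y t) (U₁ := fun x y => pdx u x y t)
    (U₂ := fun x y => pdx (pdx u) x y t) (U₃ := fun x y => pdx (pdx (pdx u)) x y t)
    (U₄ := fun x y => pdx (pdx (pdx (pdx u))) x y t) (V₁ := fun x y => pdy u x y t)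
    (V₂ := fun x y => pdy (pdy u) x y t) (V₃ := fun x y => pdy (pdy (pdy u)) x y t)
    (V₄ := fun x y => pdy (pdy (pdy (pdy u))) x y t) (M₁ := fun x y => pdy (pdx u) x y t)
    (M₂ := fun x y => pdy (pdy (pdx u)) x y t) (W := fun x y => pdt u x y t)
    hδ.1 hL hB (cont hu) (cont hu.pdx) (cont hu.pdx.pdx) (cont hu.pdx.pdx.pdx)
    (cont hu.pdx.pdx.pdx.pdx) (cont hu.pdy) (cont hu.pdy.pdy)
    (cont hu.pdy.pdy.pdy.pdy) (cont hu.pdx.pdy) (cont hu.pdx.pdy.pdy) (cont hu.pdt)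
    (fun x y => hu.hasDerivAt_x x y t) (fun x y => hu.pdx.hasDerivAt_x x y t)
    (fun x y => hu.pdx.pdx.hasDerivAt_x x y t) (fun x y => hu.pdx.pdx.pdx.hasDerivAt_x x y t)
    (fun x y => by rw [← hu.pdx_pdy]; exact hu.pdy.hasDerivAt_x x y t)
    (fun x y => hu.hasDerivAt_y x y t) (fun x y => hu.pdy.hasDerivAt_y x y t)
    (fun x y => hu.pdy.pdy.hasDerivAt_y x y t) (fun x y => hu.pdy.pdy.pdy.hasDerivAt_y x y t)
    (fun x y => hu.pdx.pdy.hasDerivAt_y x y t)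
    (fun x hx y hy => hpde x hx y hy t ht)
    (fun x hx => (hy x hx t ht').1) (fun x hx => (hy x hx t ht').2.1)
    (fun x hx => (hy x hx t ht').2.2.1) (fun x hx => (hy x hx t ht').2.2.2)
    (fun y hy => (hx y hy t ht').1) (fun y hy => (hx y hy t ht').2.1)
    (fun y hy => (hx y hy t ht').2.2.2)
  have nonlin := rectInt_abs_rpow_le (a := 0) (b := L) (c := -B) (d := B)
    (v := fun x y => u x y t) (vx := fun x y => pdx u x y t) (vy := fun x y => pdy u x y t)
    hδ hL.le hBB (cont hu) (cont hu.pdx) (cont hu.pdy)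
    (fun x y => hu.hasDerivAt_x x y t) (fun x y => hu.hasDerivAt_y x y t)
    (fun y hy => (hx y hy t ht').1) (fun x hx => (hy x hx t ht').1)
  have hgrad : rectInt 0 L (-B) B (fun x y => pdx u x y t ^ 2 + pdy u x y t ^ 2)
      = rectInt 0 L (-B) B (fun x y => pdx u x y t ^ 2)
        + rectInt 0 L (-B) B (fun x y => pdy u x y t ^ 2) :=
    rectInt_add ((cont hu.pdx).pow 2) ((cont hu.pdy).pow 2)
  have hN : 0 ≤ rectInt 0 L (-B) B (fun x y => |u x y t| ^ (3 + δ)) :=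
    rectInt_nonneg hL.le hBB fun x _ y => by positivity
  have hcoef : 2 / (3 + δ) * rectInt 0 L (-B) B (fun x y => |u x y t| ^ (3 + δ))
      ≤ rectInt 0 L (-B) B (fun x y => |u x y t| ^ (3 + δ)) :=
    mul_le_of_le_one_left hN ((div_le_one (by linarith [hδ.1])).2 (by linarith [hδ.1]))
  rw [(hu.hasDerivAt_weighted_mass 0 L (-B) B t).deriv]
  simp only [← rectInt.eq_1]
  linarith
end

section
/- Let L, B, T > 0, Ω = (0,L) × (−B,B), let f be a smooth function on [0,L] × [−B,B] × [0,T], and let u be a smooth function on [0,L] × [−B,B] × [0,T] satisfying the linear equation u_t + u_x + u_{xxx} + u_{xyy} = f on Ω × (0,T), with boundary conditions u(x,±B,t) = 0 for x ∈ (0,L) and u(0,y,t) = u(L,y,t) = u_x(L,y,t) = 0 for y ∈ (−B,B), for all t ∈ [0,T]. Then for every t ∈ (0,T), (d/dt) ∫_Ω (1+x) u_t²(t) dx dy + ∫_Ω |∇u_t(t)|² dx dy + 2 ∫_Ω u_{xt}²(t) dx dy + ∫_{−B}^{B} u_{xt}²(0,y,t) dy = ∫_Ω u_t²(t) dx dy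 + 2 ∫_Ω (1+x) f_t u_t dx dy. -/
/-!
Write `v = u_t`. Differentiating the equation in `t` gives
`v_t + v_x + v_xxx + v_xyy = f_t` on `Ω`, and differentiating the boundary conditions gives
`v = 0` on all four sides and `v_x = 0` on `x = L`; hence also `v_y = 0` on `x = 0` and `x = L`.

The integrations by parts are packaged in the pointwise divergence identity
`2(1+x) v (v_x + v_xxx + v_xyy) = ∂_x P + ∂_y Q + (-v² + 3 v_x² + v_y²)` with
`P = (1+x) v² + 2(1+x) v v_xx - 2 v v_x - (1+x) v_x² - (1+x) v_y²` and `Q = 2(1+x) v v_xy`.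
By the boundary conditions `∬ ∂_y Q = 0`, while `∬ ∂_x P = ∫ v_x(0,y)² dy`. The time derivative is
moved inside the integral by writing the integrand as the primitive of its `t`-derivative,
applying Fubini, and using the fundamental theorem of calculus (`hasDerivAt_doubleIntegral`).
Equations are only known on the open rectangle, which suffices since the sides are null sets.
-/

open MeasureTheory Real Set

/-- Joint smoothness of a curried function of `(x, y, t)`. -/
def Smooth3 (g : ℝ → ℝ → ℝ → ℝ) : Prop :=
  ContDiff ℝ (⊤ : ℕ∞) (fun p : ℝ × ℝ × ℝ => g p.1 p.2.1 p.2.2)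

namespace Smooth3

variable {g h : ℝ → ℝ → ℝ → ℝ}

lemma continuous (hg : Smooth3 g) : Continuous (fun p : ℝ × ℝ × ℝ => g p.1 p.2.1 p.2.2) :=
  ContDiff.continuous hg

lemma hasFDerivAt (hg : Smooth3 g) (p : ℝ × ℝ × ℝ) :
    HasFDerivAt (fun p : ℝ × ℝ × ℝ => g p.1 p.2.1 p.2.2)
      (fderiv ℝ (fun p : ℝ × ℝ × ℝ => g p.1 p.2.1 p.2.2) p) p :=
  (ContDiff.differentiable hg (by simp) p).hasFDerivAt

/-- `pdx`, `pdy`, `pdt` are the values of the total derivative on the standard basis vectors; this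
and the two lemmas below provide the chain rule along each axis. -/
lemma hasDerivAt_x_aux (hg : Smooth3 g) (x y t : ℝ) :
    HasDerivAt (fun x' => g x' y t)
      (fderiv ℝ (fun p : ℝ × ℝ × ℝ => g p.1 p.2.1 p.2.2) (x, y, t) (1, 0, 0)) x :=
  (hg.hasFDerivAt (x, y, t)).comp_hasDerivAt (f := (fun x' : ℝ => (x', y, t))) x
    ((hasDerivAt_id x).prodMk ((hasDerivAt_const x y).prodMk (hasDerivAt_const x t)))

lemma hasDerivAt_y_aux (hg : Smooth3 g) (x y t : ℝ) :
    HasDerivAt (fun y' => g x y' t)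
      (fderiv ℝ (fun p : ℝ × ℝ × ℝ => g p.1 p.2.1 p.2.2) (x, y, t) (0, 1, 0)) y :=
  (hg.hasFDerivAt (x, y, t)).comp_hasDerivAt (f := (fun y' : ℝ => (x, y', t))) y
    ((hasDerivAt_const y x).prodMk ((hasDerivAt_id y).prodMk (hasDerivAt_const y t)))

lemma hasDerivAt_t_aux (hg : Smooth3 g) (x y t : ℝ) :
    HasDerivAt (fun t' => g x y t')
      (fderiv ℝ (fun p : ℝ × ℝ × ℝ => g p.1 p.2.1 p.2.2) (x, y, t) (0, 0, 1)) t :=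
  (hg.hasFDerivAt (x, y, t)).comp_hasDerivAt (f := (fun t' : ℝ => (x, y, t'))) t
    ((hasDerivAt_const t x).prodMk ((hasDerivAt_const t y).prodMk (hasDerivAt_id t)))

lemma pdx_eq (hg : Smooth3 g) (x y t : ℝ) : pdx g x y t =
    fderiv ℝ (fun p : ℝ × ℝ × ℝ => g p.1 p.2.1 p.2.2) (x, y, t) (1, 0, 0) :=
  (hg.hasDerivAt_x_aux x y t).deriv

lemma pdy_eq (hg : Smooth3 g) (x y t : ℝ) : pdy g x y t =
    fderiv ℝ (fun p : ℝ × ℝ × ℝ => g p.1 p.2.1 p.2.2) (x, y, t) (0, 1, 0) :=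
  (hg.hasDerivAt_y_aux x y t).deriv

lemma pdt_eq (hg : Smooth3 g) (x y t : ℝ) : pdt g x y t =
    fderiv ℝ (fun p : ℝ × ℝ × ℝ => g p.1 p.2.1 p.2.2) (x, y, t) (0, 0, 1) :=
  (hg.hasDerivAt_t_aux x y t).deriv

lemma hasDerivAt_x (hg : Smooth3 g) (x y t : ℝ) :
    HasDerivAt (fun x' => g x' y t) (pdx g x y t) x :=
  (hg.hasDerivAt_x_aux x y t).differentiableAt.hasDerivAt

lemma hasDerivAt_y (hg : Smooth3 g) (x y t : ℝ) :
    HasDerivAt (fun y' => g x y' t) (pdy g x y t) y :=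
  (hg.hasDerivAt_y_aux x y t).differentiableAt.hasDerivAt

lemma hasDerivAt_t (hg : Smooth3 g) (x y t : ℝ) :
    HasDerivAt (fun t' => g x y t') (pdt g x y t) t :=
  (hg.hasDerivAt_t_aux x y t).differentiableAt.hasDerivAt

lemma fderiv_apply (hg : Smooth3 g) (e : ℝ × ℝ × ℝ) : ContDiff ℝ (⊤ : ℕ∞)
    (fun p => fderiv ℝ (fun p : ℝ × ℝ × ℝ => g p.1 p.2.1 p.2.2) p e) :=
  (ContDiff.fderiv_right hg (m := (⊤ : ℕ∞)) (by simp)).clm_apply contDiff_const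

lemma pdx (hg : Smooth3 g) : Smooth3 (pdx g) := by
  unfold Smooth3
  simp only [hg.pdx_eq]
  exact hg.fderiv_apply _

lemma pdy (hg : Smooth3 g) : Smooth3 (pdy g) := by
  unfold Smooth3
  simp only [hg.pdy_eq]
  exact hg.fderiv_apply _

lemma pdt (hg : Smooth3 g) : Smooth3 (pdt g) := by
  unfold Smooth3
  simp only [hg.pdt_eq]
  exact hg.fderiv_apply _

/-- Symmetry of the second derivative, for two constant directions. -/
lemma fderiv_fderiv_comm (hg : Smooth3 g) (p a b : ℝ × ℝ × ℝ) :
    fderiv ℝ (fun q => fderiv ℝ (fun p : ℝ × ℝ × ℝ => g p.1 p.2.1 p.2.2) q a) p b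
      = fderiv ℝ (fun q => fderiv ℝ (fun p : ℝ × ℝ × ℝ => g p.1 p.2.1 p.2.2) q b) p a := by
  have hd : DifferentiableAt ℝ (fderiv ℝ (fun p : ℝ × ℝ × ℝ => g p.1 p.2.1 p.2.2)) p :=
    (ContDiff.fderiv_right hg (m := (⊤ : ℕ∞)) (by simp)).differentiable (by simp) p
  have key (c d : ℝ × ℝ × ℝ) :
      fderiv ℝ (fun q => fderiv ℝ (fun p : ℝ × ℝ × ℝ => g p.1 p.2.1 p.2.2) q c) p d
        = fderiv ℝ (fderiv ℝ (fun p : ℝ × ℝ × ℝ => g p.1 p.2.1 p.2.2)) p d c := by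
    rw [fderiv_clm_apply hd (differentiableAt_const c)]
    simp
  rw [key, key]
  exact (ContDiff.contDiffAt hg).isSymmSndFDerivAt
    (by simp only [minSmoothness_of_isRCLikeNormedField]; exact WithTop.coe_le_coe.2 (le_top : (2 : ℕ∞) ≤ ⊤)) b a

lemma pdt_pdx (hg : Smooth3 g) : _root_.pdt (_root_.pdx g) = _root_.pdx (_root_.pdt g) := by
  funext x y t
  rw [hg.pdx.pdt_eq, hg.pdt.pdx_eq]
  simp only [hg.pdx_eq, hg.pdt_eq]
  exact hg.fderiv_fderiv_comm _ _ _

lemma pdt_pdy (hg : Smooth3 g) : _root_.pdt (_root_.pdy g) = _root_.pdy (_root_.pdt g) := by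
  funext x y t
  rw [hg.pdy.pdt_eq, hg.pdt.pdy_eq]
  simp only [hg.pdy_eq, hg.pdt_eq]
  exact hg.fderiv_fderiv_comm _ _ _

lemma pdx_pdy (hg : Smooth3 g) : _root_.pdx (_root_.pdy g) = _root_.pdy (_root_.pdx g) := by
  funext x y t
  rw [hg.pdy.pdx_eq, hg.pdx.pdy_eq]
  simp only [hg.pdy_eq, hg.pdx_eq]
  exact hg.fderiv_fderiv_comm _ _ _

lemma continuous_comp {X : Type*} [TopologicalSpace X] (hg : Smooth3 g) {a b c : X → ℝ}
    (ha : Continuous a) (hb : Continuous b) (hc : Continuous c) :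
    Continuous (fun z => g (a z) (b z) (c z)) :=
  hg.continuous.comp (ha.prodMk (hb.prodMk hc))

end Smooth3

lemma intervalIntegral_swap_of_continuous {F : ℝ → ℝ → ℝ}
    (hF : Continuous (Function.uncurry F)) (a b c d : ℝ) :
    ∫ x in a..b, ∫ y in c..d, F x y = ∫ y in c..d, ∫ x in a..b, F x y := by
  apply intervalIntegral_intervalIntegral_swap
  exact (hF.continuousOn.integrableOn_compact (isCompact_uIcc.prod isCompact_uIcc)).mono_set
    (prod_mono uIoc_subset_uIcc uIoc_subset_uIcc)

/-- Differentiation under a double integral over a rectangle. -/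
lemma hasDerivAt_doubleIntegral {g : ℝ → ℝ → ℝ → ℝ} (hg : Smooth3 g) (a b c d t : ℝ) :
    HasDerivAt (fun s => ∫ x in a..b, ∫ y in c..d, g x y s)
      (∫ x in a..b, ∫ y in c..d, pdt g x y t) t := by
  have hc := hg.continuous
  have hct := hg.pdt.continuous
  have hrep : (fun s => ∫ x in a..b, ∫ y in c..d, g x y s) = fun s =>
      (∫ x in a..b, ∫ y in c..d, g x y 0)
        + ∫ r in (0:ℝ)..s, ∫ x in a..b, ∫ y in c..d, pdt g x y r := by
    funext s
    have h1 (x y : ℝ) : g x y s = g x y 0 + ∫ r in (0:ℝ)..s, pdt g x y r := by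
      rw [intervalIntegral.integral_eq_sub_of_hasDerivAt (fun r _ => hg.hasDerivAt_t x y r)
        ((hg.pdt.continuous_comp continuous_const continuous_const
          continuous_id).intervalIntegrable _ _)]
      ring
    have h2 (x : ℝ) : ∫ y in c..d, g x y s
        = (∫ y in c..d, g x y 0) + ∫ r in (0:ℝ)..s, ∫ y in c..d, pdt g x y r := by
      rw [← intervalIntegral_swap_of_continuous (F := fun y r => pdt g x y r)
        (hg.pdt.continuous_comp (by fun_prop) (by fun_prop) (by fun_prop)),
        ← intervalIntegral.integral_add]
      · simp only [h1 x _]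
      · exact (hg.continuous_comp (by fun_prop) (by fun_prop)
          (by fun_prop)).intervalIntegrable _ _
      · refine Continuous.intervalIntegrable ?_ _ _
        apply intervalIntegral.continuous_parametric_intervalIntegral_of_continuous'
        exact hg.pdt.continuous_comp (by fun_prop) (by fun_prop) (by fun_prop)
    have hin : Continuous (Function.uncurry fun x r => ∫ y in c..d, pdt g x y r) := by
      apply intervalIntegral.continuous_parametric_intervalIntegral_of_continuous'
      exact hg.pdt.continuous_comp (by fun_prop) (by fun_prop) (by fun_prop)
    rw [← intervalIntegral_swap_of_continuous (F := fun x r => ∫ y in c..d, pdt g x y r) hin,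
      ← intervalIntegral.integral_add]
    · simp only [h2]
    · refine Continuous.intervalIntegrable ?_ _ _
      apply intervalIntegral.continuous_parametric_intervalIntegral_of_continuous'
      exact hg.continuous_comp (by fun_prop) (by fun_prop) (by fun_prop)
    · refine Continuous.intervalIntegrable ?_ _ _
      exact intervalIntegral.continuous_parametric_intervalIntegral_of_continuous' hin _ _
  have hout : Continuous fun r => ∫ x in a..b, ∫ y in c..d, pdt g x y r := by
    apply intervalIntegral.continuous_parametric_intervalIntegral_of_continuous'
    apply intervalIntegral.continuous_parametric_intervalIntegral_of_continuous'
    exact hg.pdt.continuous_comp (by fun_prop) (by fun_prop) (by fun_prop)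
  rw [hrep]
  exact (intervalIntegral.integral_hasDerivAt_right (hout.intervalIntegrable _ _)
    (hout.stronglyMeasurableAtFilter _ _) hout.continuousAt).const_add _

lemma doubleIntegral_add {F G : ℝ → ℝ → ℝ} (hF : Continuous (Function.uncurry F))
    (hG : Continuous (Function.uncurry G)) (a b c d : ℝ) :
    ∫ x in a..b, ∫ y in c..d, (F x y + G x y)
      = (∫ x in a..b, ∫ y in c..d, F x y) + ∫ x in a..b, ∫ y in c..d, G x y := by
  rw [← intervalIntegral.integral_add]
  · congr 1 with x
    exact intervalIntegral.integral_add
      ((hF.comp (Continuous.prodMk_right x)).intervalIntegrable _ _)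
      ((hG.comp (Continuous.prodMk_right x)).intervalIntegrable _ _)
  · exact (intervalIntegral.continuous_parametric_intervalIntegral_of_continuous'
      hF _ _).intervalIntegrable _ _
  · exact (intervalIntegral.continuous_parametric_intervalIntegral_of_continuous'
      hG _ _).intervalIntegrable _ _

lemma doubleIntegral_const_mul (k : ℝ) (F : ℝ → ℝ → ℝ) (a b c d : ℝ) :
    ∫ x in a..b, ∫ y in c..d, k * F x y = k * ∫ x in a..b, ∫ y in c..d, F x y := by
  simp only [intervalIntegral.integral_const_mul]

/-- The spatial energy identity at a fixed time: the integrand on the left is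
`∂_x P + ∂_y Q - v² + (v_x² + v_y²) + 2 v_x²`, and only the trace `v_x(0, ·)` survives. -/
lemma spatial_identity {v : ℝ → ℝ → ℝ → ℝ} (hv : Smooth3 v) {L B t : ℝ} (hL : 0 < L) (hB : 0 < B)
    (hY : ∀ x ∈ Ioo (0 : ℝ) L, v x (-B) t = 0 ∧ v x B t = 0)
    (hX : ∀ y ∈ Ioo (-B) B, v 0 y t = 0 ∧ v L y t = 0 ∧ pdx v L y t = 0) :
    ∫ x in (0:ℝ)..L, ∫ y in (-B)..B, 2 * ((1 + x) * v x y t *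
        (pdx v x y t + pdx (pdx (pdx v)) x y t + pdy (pdy (pdx v)) x y t))
      = (∫ y in (-B)..B, (pdx v 0 y t) ^ 2)
        - (∫ x in (0:ℝ)..L, ∫ y in (-B)..B, (v x y t) ^ 2)
        + (∫ x in (0:ℝ)..L, ∫ y in (-B)..B, ((pdx v x y t) ^ 2 + (pdy v x y t) ^ 2))
        + 2 * (∫ x in (0:ℝ)..L, ∫ y in (-B)..B, (pdx v x y t) ^ 2) := by
  have hBB : -B ≤ B := by linarith
  have hvy : ∀ y ∈ Ioo (-B) B, pdy v 0 y t = 0 ∧ pdy v L y t = 0 := by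
    intro y hy
    have hnhds := Ioo_mem_nhds hy.1 hy.2
    constructor
    · refine (hv.hasDerivAt_y 0 y t).unique ((hasDerivAt_const y (0:ℝ)).congr_of_eventuallyEq ?_)
      filter_upwards [hnhds] with z hz using (hX z hz).1
    · refine (hv.hasDerivAt_y L y t).unique ((hasDerivAt_const y (0:ℝ)).congr_of_eventuallyEq ?_)
      filter_upwards [hnhds] with z hz using (hX z hz).2.1
  have cont {g : ℝ → ℝ → ℝ → ℝ} (hg : Smooth3 g) :
      Continuous (fun p : ℝ × ℝ => g p.1 p.2 t) :=
    hg.continuous_comp continuous_fst continuous_snd continuous_const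
  have c0 := cont hv
  have c1 := cont hv.pdx
  have c2 := cont hv.pdx.pdx
  have c3 := cont hv.pdx.pdx.pdx
  have cy := cont hv.pdy
  have cxy := cont hv.pdx.pdy
  have cxyy := cont hv.pdx.pdy.pdy
  set P : ℝ → ℝ → ℝ := fun x y => (1 + x) * (v x y t) ^ 2
    + 2 * (1 + x) * v x y t * pdx (pdx v) x y t - 2 * v x y t * pdx v x y t
    - (1 + x) * (pdx v x y t) ^ 2 - (1 + x) * (pdy v x y t) ^ 2 with hP
  set P' : ℝ → ℝ → ℝ := fun x y => (v x y t) ^ 2 + 2 * (1 + x) * v x y t * pdx v x y t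
    + 2 * (1 + x) * v x y t * pdx (pdx (pdx v)) x y t - 3 * (pdx v x y t) ^ 2
    - (pdy v x y t) ^ 2 - 2 * (1 + x) * pdy v x y t * pdy (pdx v) x y t with hP'
  set Q : ℝ → ℝ → ℝ := fun x y => 2 * (1 + x) * (v x y t * pdy (pdx v) x y t) with hQ
  set Q' : ℝ → ℝ → ℝ := fun x y => 2 * (1 + x) *
    (pdy v x y t * pdy (pdx v) x y t + v x y t * pdy (pdy (pdx v)) x y t) with hQ'
  have cP' : Continuous (Function.uncurry P') := by
    simp only [hP', Function.uncurry_def]; fun_prop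
  have cQ' : Continuous (Function.uncurry Q') := by
    simp only [hQ', Function.uncurry_def]; fun_prop
  have dP (x y : ℝ) : HasDerivAt (fun x => P x y) (P' x y) x := by
    have d0 := hv.hasDerivAt_x x y t
    have d1 := hv.pdx.hasDerivAt_x x y t
    have d2 := hv.pdx.pdx.hasDerivAt_x x y t
    have dy := hv.pdy.hasDerivAt_x x y t
    rw [hv.pdx_pdy] at dy
    have dw : HasDerivAt (fun x : ℝ => 1 + x) 1 x := (hasDerivAt_id x).const_add 1
    have := ((((dw.mul (d0.pow 2)).add (((dw.const_mul 2).mul d0).mul d2)).sub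
      ((d0.const_mul 2).mul d1)).sub (dw.mul (d1.pow 2))).sub (dw.mul (dy.pow 2))
    refine HasDerivAt.congr_deriv (f := fun x => P x y) this ?_
    simp only [hP', Pi.mul_apply, Pi.pow_apply]
    push_cast
    ring
  have dQ (x y : ℝ) : HasDerivAt (fun y => Q x y) (Q' x y) y :=
    ((hv.hasDerivAt_y x y t).mul (hv.pdx.pdy.hasDerivAt_y x y t)).const_mul _
  have iP : ∫ x in (0:ℝ)..L, ∫ y in (-B)..B, P' x y = ∫ y in (-B)..B, (pdx v 0 y t) ^ 2 := by
    rw [intervalIntegral_swap_of_continuous cP']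
    refine intervalIntegral.integral_congr_Ioo_of_le hBB fun y hy => ?_
    rw [intervalIntegral.integral_eq_sub_of_hasDerivAt (fun x _ => dP x y)
      ((cP'.comp (Continuous.prodMk_left y)).intervalIntegrable _ _)]
    obtain ⟨h1, h2, h3⟩ := hX y hy
    obtain ⟨h4, h5⟩ := hvy y hy
    simp only [hP, h1, h2, h3, h4, h5]
    ring
  have iQ : ∫ x in (0:ℝ)..L, ∫ y in (-B)..B, Q' x y = 0 := by
    refine (intervalIntegral.integral_congr_Ioo_of_le hL.le (g := fun _ => 0) fun x hx => ?_).trans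
      intervalIntegral.integral_zero
    change ∫ y in (-B)..B, Q' x y = 0
    rw [intervalIntegral.integral_eq_sub_of_hasDerivAt (fun y _ => dQ x y)
      ((cQ'.comp (Continuous.prodMk_right x)).intervalIntegrable _ _)]
    obtain ⟨h1, h2⟩ := hY x hx
    simp only [hQ, h1, h2]
    ring
  have hsplit (x y : ℝ) : 2 * ((1 + x) * v x y t *
        (pdx v x y t + pdx (pdx (pdx v)) x y t + pdy (pdy (pdx v)) x y t))
      = P' x y + (Q' x y + ((-1) * (v x y t) ^ 2 + (((pdx v x y t) ^ 2 + (pdy v x y t) ^ 2)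
        + 2 * (pdx v x y t) ^ 2))) := by
    simp only [hP', hQ']
    ring
  simp only [hsplit]
  rw [doubleIntegral_add cP' (by simp only [Function.uncurry_def] at *; fun_prop),
    doubleIntegral_add cQ' (by simp only [Function.uncurry_def]; fun_prop),
    doubleIntegral_add (by simp only [Function.uncurry_def]; fun_prop)
      (by simp only [Function.uncurry_def]; fun_prop),
    doubleIntegral_add (by simp only [Function.uncurry_def]; fun_prop)
      (by simp only [Function.uncurry_def]; fun_prop),
    doubleIntegral_const_mul, doubleIntegral_const_mul, iP, iQ]
  ring

/-- Time-differentiated weighted energy identity for the linear Zakharov–Kuznetsov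
equation `u_t + u_x + u_{xxx} + u_{xyy} = f` on `Ω = (0,L) × (-B,B)`:
`(d/dt)∫(1+x)u_t² + ∫|∇u_t|² + 2∫u_{xt}² + ∫ u_{xt}²(0,y,t) dy
  = ∫u_t² + 2∫(1+x) f_t u_t`. -/
theorem linear_ZK_ut_identity
    (L B T : ℝ) (hL : 0 < L) (hB : 0 < B) (hT : 0 < T)
    (f u : ℝ → ℝ → ℝ → ℝ)
    (hf : ContDiff ℝ (⊤ : ℕ∞) (fun p : ℝ × ℝ × ℝ => f p.1 p.2.1 p.2.2))
    (hu : ContDiff ℝ (⊤ : ℕ∞) (fun p : ℝ × ℝ × ℝ => u p.1 p.2.1 p.2.2))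
    (heq : ∀ x ∈ Set.Ioo (0 : ℝ) L, ∀ y ∈ Set.Ioo (-B) B, ∀ t ∈ Set.Ioo (0 : ℝ) T,
      pdt u x y t + pdx u x y t + pdx (pdx (pdx u)) x y t + pdy (pdy (pdx u)) x y t
        = f x y t)
    (hbcY : ∀ x ∈ Set.Ioo (0 : ℝ) L, ∀ t ∈ Set.Icc (0 : ℝ) T,
      u x (-B) t = 0 ∧ u x B t = 0)
    (hbcX : ∀ y ∈ Set.Ioo (-B) B, ∀ t ∈ Set.Icc (0 : ℝ) T,
      u 0 y t = 0 ∧ u L y t = 0 ∧ pdx u L y t = 0) :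
    ∀ t ∈ Set.Ioo (0 : ℝ) T,
      deriv (fun s => ∫ x in (0:ℝ)..L, ∫ y in (-B)..B, (1 + x) * (pdt u x y s) ^ 2) t
        + (∫ x in (0:ℝ)..L, ∫ y in (-B)..B,
            ((pdx (pdt u) x y t) ^ 2 + (pdy (pdt u) x y t) ^ 2))
        + 2 * (∫ x in (0:ℝ)..L, ∫ y in (-B)..B, (pdx (pdt u) x y t) ^ 2)
        + (∫ y in (-B)..B, (pdx (pdt u) 0 y t) ^ 2)
      = (∫ x in (0:ℝ)..L, ∫ y in (-B)..B, (pdt u x y t) ^ 2)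
        + 2 * ∫ x in (0:ℝ)..L, ∫ y in (-B)..B,
            (1 + x) * pdt f x y t * pdt u x y t := by
  intro t ht
  have hu' : Smooth3 u := hu
  have hf' : Smooth3 f := hf
  have hnhds : Ioo (0 : ℝ) T ∈ nhds t := Ioo_mem_nhds ht.1 ht.2
  have hv : Smooth3 (pdt u) := hu'.pdt
  have hE : ∀ x ∈ Ioo (0 : ℝ) L, ∀ y ∈ Ioo (-B) B,
      pdt (pdt u) x y t + pdx (pdt u) x y t + pdx (pdx (pdx (pdt u))) x y t
        + pdy (pdy (pdx (pdt u))) x y t = pdt f x y t := by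
    intro x hx y hy
    have d := (((hu'.pdt.hasDerivAt_t x y t).add (hu'.pdx.hasDerivAt_t x y t)).add
      (hu'.pdx.pdx.pdx.hasDerivAt_t x y t)).add (hu'.pdx.pdy.pdy.hasDerivAt_t x y t)
    rw [hu'.pdx.pdx.pdt_pdx, hu'.pdx.pdt_pdx, hu'.pdx.pdy.pdt_pdy, hu'.pdx.pdt_pdy,
      hu'.pdt_pdx] at d
    refine d.unique ((hf'.hasDerivAt_t x y t).congr_of_eventuallyEq ?_)
    filter_upwards [hnhds] with s hs using heq x hx y hy s hs
  have hzero {g : ℝ → ℝ → ℝ → ℝ} (hg : Smooth3 g) (x y : ℝ)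
      (h0 : ∀ s ∈ Icc (0 : ℝ) T, g x y s = 0) : pdt g x y t = 0 := by
    refine (hg.hasDerivAt_t x y t).unique
      ((hasDerivAt_const t (0:ℝ)).congr_of_eventuallyEq ?_)
    filter_upwards [hnhds] with s hs using h0 s (Ioo_subset_Icc_self hs)
  have hY : ∀ x ∈ Ioo (0 : ℝ) L, pdt u x (-B) t = 0 ∧ pdt u x B t = 0 := fun x hx =>
    ⟨hzero hu' _ _ fun s hs => (hbcY x hx s hs).1, hzero hu' _ _ fun s hs => (hbcY x hx s hs).2⟩
  have hX : ∀ y ∈ Ioo (-B) B, pdt u 0 y t = 0 ∧ pdt u L y t = 0 ∧ pdx (pdt u) L y t = 0 := by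
    intro y hy
    refine ⟨hzero hu' _ _ fun s hs => (hbcX y hy s hs).1,
      hzero hu' _ _ fun s hs => (hbcX y hy s hs).2.1, ?_⟩
    rw [← hu'.pdt_pdx]
    exact hzero hu'.pdx _ _ fun s hs => (hbcX y hy s hs).2.2
  have hS := spatial_identity hv hL hB hY hX
  have hw : Smooth3 (fun x y s => (1 + x) * (pdt u x y s) ^ 2) := by
    have h2 : ContDiff ℝ (⊤ : ℕ∞) (fun p : ℝ × ℝ × ℝ => pdt u p.1 p.2.1 p.2.2) := hv
    exact (contDiff_const.add contDiff_fst).mul (h2.pow 2)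
  have hwt (x y : ℝ) : pdt (fun x y s => (1 + x) * (pdt u x y s) ^ 2) x y t
      = 2 * ((1 + x) * pdt u x y t * pdt (pdt u) x y t) := by
    refine ((((hv.hasDerivAt_t x y t).pow 2).const_mul (1 + x)).deriv).trans ?_
    push_cast
    ring
  have hD := (hasDerivAt_doubleIntegral hw 0 L (-B) B t).deriv
  simp only [hwt] at hD
  have cont {g : ℝ → ℝ → ℝ → ℝ} (hg : Smooth3 g) :
      Continuous (fun p : ℝ × ℝ => g p.1 p.2 t) :=
    hg.continuous_comp continuous_fst continuous_snd continuous_const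
  have c0 := cont hv
  have ct := cont hv.pdt
  have c1 := cont hv.pdx
  have c3 := cont hv.pdx.pdx.pdx
  have cxyy := cont hv.pdx.pdy.pdy
  have hsum := doubleIntegral_add
    (F := fun x y => 2 * ((1 + x) * pdt u x y t * pdt (pdt u) x y t))
    (G := fun x y => 2 * ((1 + x) * pdt u x y t * (pdx (pdt u) x y t
      + pdx (pdx (pdx (pdt u))) x y t + pdy (pdy (pdx (pdt u))) x y t)))
    (by simp only [Function.uncurry_def]; fun_prop)
    (by simp only [Function.uncurry_def]; fun_prop) 0 L (-B) B
  have hforce : ∫ x in (0:ℝ)..L, ∫ y in (-B)..B,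
      (2 * ((1 + x) * pdt u x y t * pdt (pdt u) x y t)
        + 2 * ((1 + x) * pdt u x y t * (pdx (pdt u) x y t
          + pdx (pdx (pdx (pdt u))) x y t + pdy (pdy (pdx (pdt u))) x y t)))
      = 2 * ∫ x in (0:ℝ)..L, ∫ y in (-B)..B, (1 + x) * pdt f x y t * pdt u x y t := by
    rw [← doubleIntegral_const_mul]
    refine intervalIntegral.integral_congr_Ioo_of_le hL.le fun x hx => ?_
    refine intervalIntegral.integral_congr_Ioo_of_le (by linarith) fun y hy => ?_
    rw [← hE x hx y hy]
    ring
  linarith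
end
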